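/- arXiv:1501.07724 — 7 statements merged into one kernel-verified Lean document; each statement's English description precedes it below -/
import Mathlib

section
/- Let G be a compact Hausdorff topological group acting continuously on a topological space X, and let ⋆ ∈ X^G be a fixed point of the action. Then _{{⋆}}cat_G(X) ≤ TC^G(X). -/
open Set unitInterval

namespace PaperTC

variable {G X : Type*}

/-- The orbit of `x` under the action `act`. -/
def orbit (act : G → X → X) (x : X) : Set X := {y | ∃ g, act g x = y}

/-- The fixed point set of the action `act`. -/
def fixedSet (act : G → X → X) : Set X := {x | ∀ g, act g x = x}

/-- The fixed point set of a subset `S` of the acting group. -/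
def fixedSetOf (act : G → X → X) (S : Set G) : Set X := {x | ∀ g ∈ S, act g x = x}

/-- `minCover P` is the least `k ≥ 1` satisfying `P k`, as an element of `ℕ∞`
(equal to `∞` if there is no such `k`). -/
noncomputable def minCover (P : ℕ → Prop) : ℕ∞ :=
  sInf {k : ℕ∞ | ∃ m : ℕ, k = m ∧ 1 ≤ m ∧ P m}

section Plain

variable (Y : Type*) [TopologicalSpace Y]

/-- `Y × Y` can be covered by `k` open sets each admitting a motion planner. -/
def TCcover (k : ℕ) : Prop :=
  ∃ U : Fin k → Set (Y × Y),
    (∀ i, IsOpen (U i)) ∧ (⋃ i, U i) = univ ∧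
    ∀ i, ∃ s : Y × Y → C(I, Y),
      ContinuousOn s (U i) ∧ ∀ p ∈ U i, s p 0 = p.1 ∧ s p 1 = p.2

/-- Topological complexity (non-reduced, possibly infinite). -/
noncomputable def TC : ℕ∞ := minCover (TCcover Y)

/-- `Y` can be covered by `k` open sets, each of which can be deformed within `Y`
to a point. -/
def catCover (k : ℕ) : Prop :=
  ∃ U : Fin k → Set Y,
    (∀ i, IsOpen (U i)) ∧ (⋃ i, U i) = univ ∧
    ∀ i, ∃ H : Y × I → Y,
      ContinuousOn H (U i ×ˢ (univ : Set I)) ∧ (∀ x ∈ U i, H (x, 0) = x) ∧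
      ∃ y₀, ∀ x ∈ U i, H (x, 1) = y₀

/-- Non-reduced Lusternik–Schnirelmann category. -/
noncomputable def cat : ℕ∞ := minCover (catCover Y)

end Plain

section Equivariant

variable [TopologicalSpace X] (act : G → X → X)

/-- `X × X` can be covered by `k` invariant open sets each admitting an
equivariant motion planner. -/
def eqTCcover (k : ℕ) : Prop :=
  ∃ U : Fin k → Set (X × X),
    (∀ i, IsOpen (U i)) ∧ (⋃ i, U i) = univ ∧
    ∀ i, (∀ g p, p ∈ U i → (act g p.1, act g p.2) ∈ U i) ∧
      ∃ s : X × X → C(I, X),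
        ContinuousOn s (U i) ∧
        (∀ p ∈ U i, s p 0 = p.1 ∧ s p 1 = p.2) ∧
        (∀ g p, p ∈ U i → ∀ t : I, s (act g p.1, act g p.2) t = act g (s p t))

/-- Equivariant topological complexity `TC_G` of Colman and Grant. -/
noncomputable def eqTC : ℕ∞ := minCover (eqTCcover act)

/-- `X × X` can be covered by `k` `(G × G)`-invariant open sets, each admitting a
`(G × G)`-equivariant section of `π^G : P X ×_{X/G} P X → X × X`; such a section is
recorded by a pair of paths `s₁ p`, `s₂ p`, with the orbit of the endpoint of the first
equal to the orbit of the starting point of the second. -/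
def invTCcover (k : ℕ) : Prop :=
  ∃ U : Fin k → Set (X × X),
    (∀ i, IsOpen (U i)) ∧ (⋃ i, U i) = univ ∧
    ∀ i, (∀ g₁ g₂ : G, ∀ p, p ∈ U i → (act g₁ p.1, act g₂ p.2) ∈ U i) ∧
      ∃ s₁ s₂ : X × X → C(I, X),
        ContinuousOn s₁ (U i) ∧ ContinuousOn s₂ (U i) ∧
        (∀ p ∈ U i, s₁ p 0 = p.1 ∧ s₂ p 1 = p.2 ∧
          orbit act (s₁ p 1) = orbit act (s₂ p 0)) ∧
        (∀ g₁ g₂ : G, ∀ p, p ∈ U i → ∀ t : I,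
          s₁ (act g₁ p.1, act g₂ p.2) t = act g₁ (s₁ p t) ∧
          s₂ (act g₁ p.1, act g₂ p.2) t = act g₂ (s₂ p t))

/-- Invariant topological complexity `TC^G` of Lubawski and Marzantowicz. -/
noncomputable def invTC : ℕ∞ := minCover (invTCcover act)

/-- The invariant open set `U` is `G`-compressible into `A`: the inclusion `U ↪ X` is
`G`-equivariantly homotopic to a `G`-map with values in `A`. -/
def GCompressible (A : Set X) (U : Set X) : Prop :=
  (∀ g x, x ∈ U → act g x ∈ U) ∧
  ∃ H : X × I → X,
    ContinuousOn H (U ×ˢ (univ : Set I)) ∧ (∀ x ∈ U, H (x, 0) = x) ∧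
    (∀ g x, x ∈ U → ∀ t : I, H (act g x, t) = act g (H (x, t))) ∧
    (∀ x ∈ U, H (x, 1) ∈ A)

/-- A `G`-categorical set: compressible into a single orbit. -/
def GCategorical (U : Set X) : Prop :=
  ∃ x₀ : X, GCompressible act (orbit act x₀) U

/-- `X` can be covered by `k` open `G`-categorical sets. -/
def catGCover (k : ℕ) : Prop :=
  ∃ U : Fin k → Set X,
    (∀ i, IsOpen (U i)) ∧ (⋃ i, U i) = univ ∧ ∀ i, GCategorical act (U i)

/-- Equivariant Lusternik–Schnirelmann category `cat_G`. -/
noncomputable def catG : ℕ∞ := minCover (catGCover act)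

/-- `X` can be covered by `k` open sets `G`-compressible into `{star}`. -/
def pointedCatGCover (star : X) (k : ℕ) : Prop :=
  ∃ U : Fin k → Set X,
    (∀ i, IsOpen (U i)) ∧ (⋃ i, U i) = univ ∧
    ∀ i, GCompressible act {star} (U i)

/-- The pointed equivariant category `_{{⋆}}cat_G(X)`. -/
noncomputable def pointedCatG (star : X) : ℕ∞ := minCover (pointedCatGCover act star)

/-- `X` is `G`-contractible: the identity is `G`-homotopic to a map with values in a
single orbit. -/
def GContractible : Prop :=
  ∃ H : X × I → X,
    Continuous H ∧ (∀ x, H (x, 0) = x) ∧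
    (∀ g x, ∀ t : I, H (act g x, t) = act g (H (x, t))) ∧
    ∃ x₀ : X, ∀ x, H (x, 1) ∈ orbit act x₀

end Equivariant

/-- The orbit space `X/G` with the quotient topology. -/
abbrev OrbitSpace (act : G → X → X) : Type _ := Quot (fun x y => ∃ g, act g x = y)

end PaperTC

open PaperTC

/-- For a compact Hausdorff topological group `G` acting continuously on a
space `X` with a fixed point `⋆`, the pointed equivariant category `_{{⋆}}cat_G(X)` is a
lower bound for the invariant topological complexity `TC^G(X)`. -/
theorem pointedCatG_le_invTC {G X : Type*} [Group G] [TopologicalSpace G]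
    [IsTopologicalGroup G] [CompactSpace G] [T2Space G] [TopologicalSpace X]
    (act : G → X → X)
    (act_one : ∀ x, act 1 x = x)
    (act_mul : ∀ g h x, act (g * h) x = act g (act h x))
    (act_cont : Continuous fun p : G × X => act p.1 p.2)
    (star : X) (hstar : star ∈ fixedSet act) :
    pointedCatG act star ≤ invTC act := by
  have key : ∀ m, invTCcover act m → pointedCatGCover act star m := by
    rintro m ⟨U, hUo, hUc, hU⟩
    refine ⟨fun i => {x | (x, star) ∈ U i}, fun i => (hUo i).preimage (by fun_prop), ?_, ?_⟩
    · ext x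
      have hx : (x, star) ∈ ⋃ i, U i := by rw [hUc]; trivial
      simpa using hx
    intro i
    obtain ⟨hinv, s₁, s₂, c₁, c₂, hends, heq⟩ := hU i
    have hst : ∀ g, act g star = star := hstar
    have hV : ∀ g x, (x, star) ∈ U i → (act g x, star) ∈ U i := by
      intro g x hx
      have h := hinv g 1 _ hx
      simpa only [hst] using h
    have e₁ : ∀ g x, (x, star) ∈ U i → ∀ t, s₁ (act g x, star) t = act g (s₁ (x, star) t) := by
      intro g x hx t
      have h := (heq g 1 _ hx t).1
      simpa only [hst] using h
    have e₂ : ∀ g h x, (x, star) ∈ U i → ∀ t, s₂ (act g x, star) t = act h (s₂ (x, star) t) := by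
      intro g h x hx t
      have h := (heq g h _ hx t).2
      simpa only [hst] using h
    have f₂ : ∀ h x, (x, star) ∈ U i → ∀ t, act h (s₂ (x, star) t) = s₂ (x, star) t := by
      intro h x hx t
      rw [← e₂ 1 h x hx t, act_one]
    have hmid : ∀ x, (x, star) ∈ U i → s₁ (x, star) 1 = s₂ (x, star) 0 := by
      intro x hx
      have h : s₁ (x, star) 1 ∈ orbit act (s₂ (x, star) 0) := by
        rw [← (hends _ hx).2.2]
        exact ⟨1, act_one _⟩
      obtain ⟨g, hg⟩ := h
      rw [← hg, f₂ g x hx]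
    refine ⟨hV, fun q => if (q.2 : ℝ) ≤ 1/2
      then s₁ (q.1, star) (projIcc 0 1 zero_le_one (2 * (q.2 : ℝ)))
      else s₂ (q.1, star) (projIcc 0 1 zero_le_one (2 * (q.2 : ℝ) - 1)), ?_, ?_, ?_, ?_⟩
    · rw [continuousOn_iff_continuous_domRestrict]
      have d₁ : Continuous fun q : ({x | (x, star) ∈ U i} ×ˢ (univ : Set I) : Set (X × I)) =>
          s₁ (q.1.1, star) :=
        c₁.comp_continuous (by fun_prop) (fun q => q.2.1)
      have d₂ : Continuous fun q : ({x | (x, star) ∈ U i} ×ˢ (univ : Set I) : Set (X × I)) =>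
          s₂ (q.1.1, star) :=
        c₂.comp_continuous (by fun_prop) (fun q => q.2.1)
      refine Continuous.if_le ?_ ?_ (by fun_prop) continuous_const ?_
      · exact ContinuousEval.continuous_eval.comp
          (d₁.prodMk ((continuous_projIcc (h := zero_le_one)).comp (by fun_prop)))
      · exact ContinuousEval.continuous_eval.comp
          (d₂.prodMk ((continuous_projIcc (h := zero_le_one)).comp (by fun_prop)))
      · rintro ⟨⟨x, t⟩, hx, _⟩ ht
        dsimp only at ht ⊢
        rw [ht, projIcc_of_right_le _ (by norm_num), projIcc_of_le_left _ (by norm_num)]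
        exact hmid x hx
    · intro x hx
      have h := (hends _ hx).1
      dsimp only
      rw [if_pos (by simp), projIcc_of_le_left _ (by simp)]
      exact h
    · intro g x hx t
      dsimp only
      split_ifs
      · exact e₁ g x hx _
      · exact e₂ g g x hx _
    · intro x hx
      have h := (hends _ hx).2.1
      dsimp only
      rw [if_neg (by norm_num), projIcc_of_right_le _ (by norm_num)]
      exact h
  apply sInf_le_sInf
  rintro k ⟨m, hk, hm, h⟩
  exact ⟨m, hk, hm, key m h⟩
end

section
/- Let G be a compact Hausdorff topological group acting continuously on a topological space X with X^G ≠ ∅. Then max{cat(X), cat_G(X)} ≤ TC^G(X). -/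
open Set unitInterval

open PaperTC

theorem pointed_of_invTCcover {G X : Type*} [TopologicalSpace X]
    (act : G → X → X) (e : G) (act_one : ∀ x, act e x = x)
    (a : X) (ha : ∀ g, act g a = a) (k : ℕ) (h : invTCcover act k) :
    pointedCatGCover act a k := by
  obtain ⟨U, hUo, hUc, hU⟩ := h
  have hι : Continuous (fun x : X => (x, a)) := by fun_prop
  refine ⟨fun i => (fun x : X => (x, a)) ⁻¹' U i, fun i => (hUo i).preimage hι, ?_, fun i => ?_⟩
  · rw [← Set.preimage_iUnion, hUc, Set.preimage_univ]
  obtain ⟨hinv, s₁, s₂, hs₁, hs₂, hend, heq⟩ := hU i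
  have hinv' : ∀ g x, (x, a) ∈ U i → (act g x, a) ∈ U i := by
    intro g x hx
    have := hinv g e _ hx
    simpa [act_one] using this
  have e1 : ∀ g x, (x, a) ∈ U i → ∀ t, s₁ (act g x, a) t = act g (s₁ (x, a) t) := by
    intro g x hx t
    have := (heq g e _ hx t).1
    simpa [act_one] using this
  have e2 : ∀ g x, (x, a) ∈ U i → ∀ t, s₂ (act g x, a) t = s₂ (x, a) t := by
    intro g x hx t
    have := (heq g e _ hx t).2
    simpa [act_one] using this
  have e3 : ∀ g x, (x, a) ∈ U i → ∀ t, act g (s₂ (x, a) t) = s₂ (x, a) t := by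
    intro g x hx t
    have := (heq e g _ hx t).2
    simp only [act_one, ha] at this
    exact this.symm
  have hmid : ∀ x, (x, a) ∈ U i → s₁ (x, a) 1 = s₂ (x, a) 0 := by
    intro x hx
    have h1 : s₁ (x, a) 1 ∈ orbit act (s₂ (x, a) 0) := by
      rw [← (hend _ hx).2.2]
      exact ⟨e, act_one _⟩
    obtain ⟨g, hg⟩ := h1
    rw [← hg, e3 g x hx]
  let p : ℝ → I := Set.projIcc (0 : ℝ) 1 zero_le_one
  have hp : Continuous p := continuous_projIcc
  have p0 : ∀ r : ℝ, r ≤ 0 → p r = 0 := fun r hr => Set.projIcc_of_le_left _ hr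
  have p1 : ∀ r : ℝ, 1 ≤ r → p r = 1 := fun r hr => Set.projIcc_of_right_le _ hr
  refine ⟨hinv', fun q => if (q.2 : ℝ) ≤ 1 / 2 then s₁ (q.1, a) (p (2 * q.2))
    else s₂ (q.1, a) (p (2 * q.2 - 1)), ?_, ?_, ?_, ?_⟩
  · rw [continuousOn_iff_continuous_domRestrict]
    have hm : ∀ z : (((fun x : X => (x, a)) ⁻¹' U i) ×ˢ (univ : Set I) : Set (X × I)),
      (z.1.1, a) ∈ U i := fun z => z.2.1
    have c : ∀ s : X × X → C(I, X), ContinuousOn s (U i) → Continuous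
        (fun z : (((fun x : X => (x, a)) ⁻¹' U i) ×ˢ (univ : Set I) : Set (X × I)) =>
          s (z.1.1, a)) := fun s hs =>
      hs.comp_continuous (by fun_prop) hm
    have c1 := c s₁ hs₁
    have c2 := c s₂ hs₂
    refine Continuous.if_le (f := fun z : (((fun x : X => (x, a)) ⁻¹' U i) ×ˢ (univ : Set I) : Set (X × I)) => ((z.1.2 : I) : ℝ)) (g := fun _ => (1 / 2 : ℝ)) (f' := fun z => s₁ (z.1.1, a) (p (2 * z.1.2)))
      (g' := fun z => s₂ (z.1.1, a) (p (2 * z.1.2 - 1))) ?_ ?_ ?_ ?_ ?_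
    · exact c1.eval (hp.comp (by fun_prop))
    · exact c2.eval (hp.comp (by fun_prop))
    · fun_prop
    · fun_prop
    · intro z hz
      rw [p1 _ (by rw [hz]; norm_num), p0 _ (by rw [hz]; norm_num)]
      exact hmid _ (hm z)
  · intro x hx
    simp only [Set.Icc.coe_zero]
    rw [if_pos (by norm_num), p0 _ (by norm_num)]
    exact (hend _ hx).1
  · intro g x hx t
    dsimp only
    split_ifs
    · exact e1 g x hx _
    · rw [e2 g x hx, e3 g x hx]
  · intro x hx
    simp only [Set.Icc.coe_one]
    rw [if_neg (by norm_num), p1 _ (by norm_num)]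
    exact (hend _ hx).2.1

theorem minCover_mono' {P Q : ℕ → Prop} (h : ∀ k, P k → Q k) : minCover Q ≤ minCover P := by
  unfold minCover
  apply sInf_le_sInf
  rintro k ⟨m, hk, hm, hP⟩
  exact ⟨m, hk, hm, h m hP⟩


/-- For a compact Hausdorff topological group `G` acting continuously on a
space `X` with `X^G ≠ ∅`, both the Lusternik–Schnirelmann category of `X` and its
equivariant category bound the invariant topological complexity from below. -/
theorem max_cat_catG_le_invTC {G X : Type*} [Group G] [TopologicalSpace G]
    [IsTopologicalGroup G] [CompactSpace G] [T2Space G] [TopologicalSpace X]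
    (act : G → X → X)
    (act_one : ∀ x, act 1 x = x)
    (act_mul : ∀ g h x, act (g * h) x = act g (act h x))
    (act_cont : Continuous fun p : G × X => act p.1 p.2)
    (hfix : (fixedSet act).Nonempty) :
    max (cat X) (catG act) ≤ invTC act := by

  obtain ⟨a, ha⟩ := hfix
  have key := pointed_of_invTCcover act 1 act_one a ha
  refine max_le (minCover_mono' fun k hk => ?_) (minCover_mono' fun k hk => ?_)
  · obtain ⟨U, hUo, hUc, hU⟩ := key k hk
    refine ⟨U, hUo, hUc, fun i => ?_⟩
    obtain ⟨-, H, hH, h0, -, h1⟩ := hU i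
    exact ⟨H, hH, h0, a, h1⟩
  · obtain ⟨U, hUo, hUc, hU⟩ := key k hk
    refine ⟨U, hUo, hUc, fun i => ?_⟩
    obtain ⟨hinv, H, hH, h0, he, h1⟩ := hU i
    refine ⟨a, hinv, H, hH, h0, he, fun x hx => ?_⟩
    exact ⟨1, by rw [act_one]; exact (h1 x hx).symm⟩
end

section
/- Let G be a topological group acting continuously on a topological space X. If X is G-contractible (i.e. there is a G-equivariant homotopy from the identity of X to a G-equivariant map with values in a single orbit), then TC^G(X) = 1. No assumption that X^G is non-empty (nor that X is connected) is needed. -/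
open Set unitInterval

open PaperTC

/-- If a topological group `G` acts continuously on a space `X` and `X` is
`G`-contractible, then `TC^G(X) = 1`; no assumption on `X^G` (nor connectedness of `X`)
is needed. -/
theorem invTC_eq_one_of_GContractible {G X : Type*} [Group G] [TopologicalSpace G]
    [IsTopologicalGroup G] [TopologicalSpace X]
    (act : G → X → X)
    (act_one : ∀ x, act 1 x = x)
    (act_mul : ∀ g h x, act (g * h) x = act g (act h x))
    (act_cont : Continuous fun p : G × X => act p.1 p.2)
    (hc : GContractible act) :
    invTC act = 1 := by
  obtain ⟨H, hH, h0, heq, x₀, hx₀⟩ := hc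
  have orb : ∀ y, y ∈ orbit act x₀ → orbit act y = orbit act x₀ := by
    rintro y ⟨g, rfl⟩
    ext z
    constructor
    · rintro ⟨h, rfl⟩
      exact ⟨h * g, act_mul _ _ _⟩
    · rintro ⟨h, rfl⟩
      refine ⟨h * g⁻¹, ?_⟩
      rw [← act_mul, inv_mul_cancel_right]
  let F₁ : C((X × X) × I, X) := ⟨fun q => H (q.1.1, q.2), by fun_prop⟩
  let F₂ : C((X × X) × I, X) := ⟨fun q => H (q.1.2, σ q.2), by fun_prop⟩
  have hcov : invTCcover act 1 := by
    refine ⟨fun _ => univ, fun _ => isOpen_univ, iUnion_const _, fun _ =>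
      ⟨fun _ _ _ _ => mem_univ _, F₁.curry, F₂.curry,
        F₁.curry.continuous.continuousOn, F₂.curry.continuous.continuousOn, ?_, ?_⟩⟩
    · intro p _
      refine ⟨h0 p.1, ?_, ?_⟩
      · change H (p.2, σ 1) = p.2
        rw [symm_one, h0]
      · change orbit act (H (p.1, 1)) = orbit act (H (p.2, σ 0))
        rw [symm_zero, orb _ (hx₀ _), orb _ (hx₀ _)]
    · intro g₁ g₂ p _ t
      exact ⟨heq _ _ _, heq _ _ _⟩
  unfold invTC minCover
  apply le_antisymm
  · exact sInf_le ⟨1, by simp, le_rfl, hcov⟩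
  · apply le_sInf
    rintro k ⟨m, rfl, hm, _⟩
    exact_mod_cast hm
end

section
/- Let G be a compact Hausdorff topological group acting continuously on a topological space X with X^G ≠ ∅. If TC^G(X) = 1, then X is G-contractible. -/
open Set unitInterval

open PaperTC

/-- For a compact Hausdorff topological group `G` acting continuously on a
space `X` with `X^G ≠ ∅`, if `TC^G(X) = 1` then `X` is `G`-contractible. -/
theorem gContractible_of_invTC_eq_one {G X : Type*} [Group G] [TopologicalSpace G]
    [IsTopologicalGroup G] [CompactSpace G] [T2Space G] [TopologicalSpace X]
    (act : G → X → X)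
    (act_one : ∀ x, act 1 x = x)
    (act_mul : ∀ g h x, act (g * h) x = act g (act h x))
    (act_cont : Continuous fun p : G × X => act p.1 p.2)
    (hfix : (fixedSet act).Nonempty)
    (h : invTC act = 1) :
    GContractible act := by
  obtain ⟨z, hz⟩ := hfix
  have hc : invTCcover act 1 := by
    have hne : {k : ℕ∞ | ∃ m : ℕ, k = m ∧ 1 ≤ m ∧ invTCcover act m}.Nonempty := by
      by_contra hcon
      rw [Set.not_nonempty_iff_eq_empty] at hcon
      unfold invTC minCover at h
      rw [hcon, sInf_empty] at h
      exact absurd h (by simp)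
    obtain ⟨m, hm, -, hP⟩ := csInf_mem hne
    have h1 : ((m : ℕ) : ℕ∞) = 1 := hm.symm.trans h
    have h2 : m = 1 := by exact_mod_cast h1
    exact h2 ▸ hP
  obtain ⟨U, -, hcov, hU⟩ := hc
  obtain ⟨-, s₁, s₂, c₁, c₂, hs, he⟩ := hU 0
  have hall : U 0 = univ := by
    rw [← hcov]
    ext p
    simp [Fin.exists_fin_one]
  rw [hall] at c₁ c₂ hs he
  have c₁' : Continuous s₁ := continuousOn_univ.mp c₁
  have c₂' : Continuous s₂ := continuousOn_univ.mp c₂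
  have hs0 : ∀ p, s₁ p 0 = p.1 := fun p => (hs p (mem_univ _)).1
  have hs1 : ∀ p, s₂ p 1 = p.2 := fun p => (hs p (mem_univ _)).2.1
  -- the second path, ending at the fixed point, is fixed pointwise
  have hfix₂ : ∀ g x t, act g (s₂ (x, z) t) = s₂ (x, z) t := by
    intro g x t
    have := (he 1 g (x, z) (mem_univ _) t).2
    simp only [act_one, hz g] at this
    exact this.symm
  have hinv₂ : ∀ g x t, s₂ (act g x, z) t = s₂ (x, z) t := by
    intro g x t
    have := (he g 1 (x, z) (mem_univ _) t).2
    simpa only [act_one] using this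
  have heq₁ : ∀ g x t, s₁ (act g x, z) t = act g (s₁ (x, z) t) := by
    intro g x t
    have := (he g 1 (x, z) (mem_univ _) t).1
    simpa only [act_one] using this
  have hmid : ∀ x, s₁ (x, z) 1 = s₂ (x, z) 0 := by
    intro x
    have ho := (hs (x, z) (mem_univ _)).2.2
    have hm : s₁ (x, z) 1 ∈ orbit act (s₁ (x, z) 1) := ⟨1, act_one _⟩
    rw [ho] at hm
    obtain ⟨g, hg⟩ := hm
    rw [← hg, hfix₂]
  have e₁ : Continuous fun q : X × I =>
      s₁ (q.1, z) (projIcc (0 : ℝ) 1 zero_le_one (2 * (q.2 : ℝ))) := by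
    have a : Continuous fun q : X × I => s₁ (q.1, z) := c₁'.comp (by fun_prop)
    have b : Continuous fun q : X × I => projIcc (0 : ℝ) 1 zero_le_one (2 * (q.2 : ℝ)) :=
      continuous_projIcc.comp (by fun_prop)
    exact a.eval b
  have e₂ : Continuous fun q : X × I =>
      s₂ (q.1, z) (projIcc (0 : ℝ) 1 zero_le_one (2 * (q.2 : ℝ) - 1)) := by
    have a : Continuous fun q : X × I => s₂ (q.1, z) := c₂'.comp (by fun_prop)
    have b : Continuous fun q : X × I => projIcc (0 : ℝ) 1 zero_le_one (2 * (q.2 : ℝ) - 1) :=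
      continuous_projIcc.comp (by fun_prop)
    exact a.eval b
  refine ⟨fun q => if 2 * (q.2 : ℝ) ≤ 1 then
      s₁ (q.1, z) (projIcc (0 : ℝ) 1 zero_le_one (2 * (q.2 : ℝ)))
    else s₂ (q.1, z) (projIcc (0 : ℝ) 1 zero_le_one (2 * (q.2 : ℝ) - 1)), ?_, ?_, ?_, z, ?_⟩
  · refine Continuous.if_le e₁ e₂ (by fun_prop) continuous_const ?_
    intro q hq
    rw [hq, sub_self, projIcc_left, projIcc_right]
    exact hmid q.1
  · intro x
    have : projIcc (0 : ℝ) 1 zero_le_one 0 = (0 : I) := projIcc_left _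
    simp [this, hs0]
  · intro g x t
    dsimp only
    split_ifs
    · exact heq₁ _ _ _
    · rw [hinv₂, hfix₂]
  · intro x
    refine ⟨1, ?_⟩
    have h1 : projIcc (0 : ℝ) 1 zero_le_one 1 = (1 : I) := projIcc_right _
    have h2 : (2 : ℝ) - 1 = 1 := by norm_num
    have h3 : ¬ (2 : ℝ) ≤ 1 := by norm_num
    simp [h1, h2, hs1, act_one]
end

section
/- Let G = ℤ/2 ⊕ ℤ/2 with generators a and b, and let X = S¹ ∖ {(0,1), (0,−1)} ⊆ ℝ², with the G-action determined by a·(x,y) = (−x,y) and b·(x,y) = (x,−y). Then TC^G(X) = 1 (indeed X is G-contractible), while the fixed point set X^{⟨b⟩} = {(1,0), (−1,0)} is not path-connected, so TC(X^{⟨b⟩}) = ∞. In particular, a space need not be G-connected for TC^G to be finite, and TC(X^H) ≤ TC^G(X) fails in general. -/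
open Set unitInterval

namespace PaperTC

/-- The circle `S¹ ⊆ ℝ²` with the north and south poles removed. -/
def X4 : Set (ℝ × ℝ) := {p | p.1 ^ 2 + p.2 ^ 2 = 1 ∧ p ≠ (0, 1) ∧ p ≠ (0, -1)}

/-- The sign `±1` attached to an element of `ℤ/2`. -/
noncomputable def sgn (a : ZMod 2) : ℝ := if a = 0 then 1 else -1

lemma sgn_cases (a : ZMod 2) : sgn a = 1 ∨ sgn a = -1 := by
  unfold sgn; split <;> simp

lemma X4_mem {p : ℝ × ℝ} (hp : p ∈ X4) {s t : ℝ}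
    (hs : s = 1 ∨ s = -1) (ht : t = 1 ∨ t = -1) : (s * p.1, t * p.2) ∈ X4 := by
  obtain ⟨h1, h2, h3⟩ := hp
  rw [Ne, Prod.ext_iff] at h2 h3
  push_neg at h2 h3
  dsimp only at h2 h3
  refine ⟨?_, ?_, ?_⟩
  · dsimp only
    rcases hs with rfl | rfl <;> rcases ht with rfl | rfl <;> nlinarith [h1]
  · rw [Ne, Prod.ext_iff]; push_neg
    intro h0 h1'
    dsimp only at h0 h1'
    have hp1 : p.1 = 0 := by rcases hs with rfl | rfl <;> linarith
    rcases ht with rfl | rfl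
    · exact h2 hp1 (by linarith)
    · exact h3 hp1 (by linarith)
  · rw [Ne, Prod.ext_iff]; push_neg
    intro h0 h1'
    dsimp only at h0 h1'
    have hp1 : p.1 = 0 := by rcases hs with rfl | rfl <;> linarith
    rcases ht with rfl | rfl
    · exact h3 hp1 (by linarith)
    · exact h2 hp1 (by linarith)

/-- The action of `ℤ/2 ⊕ ℤ/2` on `X4`: the first generator `a = (1,0)` negates the first
coordinate, the second generator `b = (0,1)` negates the second coordinate. -/
noncomputable def act4 : ZMod 2 × ZMod 2 → ↥X4 → ↥X4 := fun g x =>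
  ⟨(sgn g.1 * (x : ℝ × ℝ).1, sgn g.2 * (x : ℝ × ℝ).2),
    X4_mem x.2 (sgn_cases g.1) (sgn_cases g.2)⟩

/-- The fixed point set of the subgroup `⟨b⟩` generated by `b = (0,1)`. -/
noncomputable def fixB : Set ↥X4 :=
  fixedSetOf act4
    (AddSubgroup.zmultiples ((0, 1) : ZMod 2 × ZMod 2) : Set (ZMod 2 × ZMod 2))

lemma eq_or_of_sq {x : ℝ} (h : x ^ 2 + 0 ^ 2 = 1) : x = 1 ∨ x = -1 := by
  have h : (x - 1) * (x + 1) = 0 := by linarith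
  rcases mul_eq_zero.mp h with h | h
  · left; linarith
  · right; linarith

lemma X4_ne {p : ℝ × ℝ} (hp : p ∈ X4) : p.1 ≠ 0 := by
  obtain ⟨h1, h2, h3⟩ := hp
  intro h0
  have h : (p.2 - 1) * (p.2 + 1) = 0 := by rw [h0] at h1; linarith
  rcases mul_eq_zero.mp h with h | h
  · exact h2 (Prod.ext h0 (by simp; linarith))
  · exact h3 (Prod.ext h0 (by simp; linarith))

lemma X4_mem_of {x y : ℝ} (h : x ^ 2 + y ^ 2 = 1) (hx : x ≠ 0) : (x, y) ∈ X4 := by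
  refine ⟨h, ?_, ?_⟩ <;> intro h' <;> exact hx (congrArg Prod.fst h')

lemma sgn_sq (a : ZMod 2) : sgn a ^ 2 = 1 := by
  rcases sgn_cases a with h | h <;> rw [h] <;> norm_num

lemma sgn_zero : sgn 0 = 1 := by simp [sgn]

lemma sgn_one : sgn 1 = -1 := by simp [sgn]

lemma sgn_add (a b : ZMod 2) : sgn (a + b) = sgn a * sgn b := by
  have h2 : (1 : ZMod 2) + 1 = 0 := by decide
  have key : ∀ c : ZMod 2, c = 0 ∨ c = 1 := by decide
  rcases key a with rfl | rfl <;> rcases key b with rfl | rfl <;>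
    simp [sgn_zero, sgn_one, h2]

lemma act4_fst (g : ZMod 2 × ZMod 2) (x : ↥X4) :
    (act4 g x : ℝ × ℝ).1 = sgn g.1 * (x : ℝ × ℝ).1 := rfl

lemma act4_snd (g : ZMod 2 × ZMod 2) (x : ↥X4) :
    (act4 g x : ℝ × ℝ).2 = sgn g.2 * (x : ℝ × ℝ).2 := rfl

lemma act4_zero (x : ↥X4) : act4 0 x = x := by
  apply Subtype.ext
  apply Prod.ext
  · rw [act4_fst]; simp [sgn_zero]
  · rw [act4_snd]; simp [sgn_zero]

lemma act4_add (g h : ZMod 2 × ZMod 2) (x : ↥X4) :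
    act4 (g + h) x = act4 g (act4 h x) := by
  apply Subtype.ext
  apply Prod.ext
  · simp only [act4_fst, Prod.fst_add, sgn_add]; ring
  · simp only [act4_snd, Prod.snd_add, sgn_add]; ring

lemma act4_cont (g : ZMod 2 × ZMod 2) : Continuous (act4 g) := by
  unfold act4
  fun_prop

/-- The normalizing radius. -/
noncomputable def rad4 (x : ↥X4) (t : ℝ) : ℝ :=
  Real.sqrt ((x : ℝ × ℝ).1 ^ 2 + ((1 - t) * (x : ℝ × ℝ).2) ^ 2)

lemma rad4_pos (x : ↥X4) (t : ℝ) : 0 < rad4 x t := by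
  have := X4_ne x.2
  unfold rad4
  positivity

lemma rad4_sq (x : ↥X4) (t : ℝ) :
    rad4 x t ^ 2 = (x : ℝ × ℝ).1 ^ 2 + ((1 - t) * (x : ℝ × ℝ).2) ^ 2 :=
  Real.sq_sqrt (by positivity)

lemma rad4_act (g : ZMod 2 × ZMod 2) (x : ↥X4) (t : ℝ) : rad4 (act4 g x) t = rad4 x t := by
  unfold rad4
  rw [act4_fst, act4_snd]
  congr 1
  have h1 := sgn_sq g.1
  have h2 := sgn_sq g.2
  simp only [mul_pow, h1, h2, one_mul]

/-- The contraction. -/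
noncomputable def H4 (q : ↥X4 × I) : ↥X4 :=
  ⟨((q.1 : ℝ × ℝ).1 / rad4 q.1 q.2, (1 - (q.2 : ℝ)) * (q.1 : ℝ × ℝ).2 / rad4 q.1 q.2), by
    have h := rad4_pos q.1 q.2
    apply X4_mem_of
    · rw [div_pow, div_pow, ← add_div, ← rad4_sq]
      exact div_self (by positivity)
    · exact div_ne_zero (X4_ne q.1.2) h.ne'⟩

lemma H4_cont : Continuous H4 := by
  have hr : Continuous fun q : ↥X4 × I => rad4 q.1 q.2 := by
    unfold rad4
    fun_prop
  have hne : ∀ q : ↥X4 × I, rad4 q.1 q.2 ≠ 0 := fun q => (rad4_pos q.1 q.2).ne'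
  unfold H4
  refine Continuous.subtype_mk (Continuous.prodMk ?_ ?_) _
  · exact Continuous.div (by fun_prop) hr hne
  · exact Continuous.div (by fun_prop) hr hne

lemma H4_zero (x : ↥X4) : H4 (x, 0) = x := by
  have h : rad4 x 0 = 1 := by
    unfold rad4
    rw [sub_zero, one_mul, x.2.1, Real.sqrt_one]
  apply Subtype.ext
  simp [H4, h]

lemma H4_act (g : ZMod 2 × ZMod 2) (x : ↥X4) (t : I) :
    H4 (act4 g x, t) = act4 g (H4 (x, t)) := by
  apply Subtype.ext
  apply Prod.ext
  · rw [act4_fst]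
    simp only [H4, rad4_act, act4_fst]; ring
  · rw [act4_snd]
    simp only [H4, rad4_act, act4_snd]; ring

/-- The base point `(1,0)`. -/
noncomputable def e4 : ↥X4 := ⟨(1, 0), X4_mem_of (by norm_num) one_ne_zero⟩

/-- The point `(-1,0)`. -/
noncomputable def f4 : ↥X4 := ⟨(-1, 0), X4_mem_of (by norm_num) (by norm_num)⟩

lemma H4_one (x : ↥X4) : H4 (x, 1) ∈ orbit act4 e4 := by
  have h2 : (H4 (x, 1) : ℝ × ℝ).2 = 0 := by simp [H4]
  have h1 := (H4 (x, 1)).2.1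
  rw [h2] at h1
  have h : (H4 (x, 1) : ℝ × ℝ).1 = 1 ∨ (H4 (x, 1) : ℝ × ℝ).1 = -1 :=
    eq_or_of_sq h1
  rcases h with h | h
  · refine ⟨(0, 0), Subtype.ext (Prod.ext ?_ ?_)⟩
    · rw [act4_fst, h]; simp [e4, sgn_zero]
    · rw [act4_snd, h2]; simp [e4]
  · refine ⟨(1, 0), Subtype.ext (Prod.ext ?_ ?_)⟩
    · rw [act4_fst, h]; simp [e4, sgn_one]
    · rw [act4_snd, h2]; simp [e4]

lemma orbit_eq {x y : ↥X4} (h : y ∈ orbit act4 x) : orbit act4 y = orbit act4 x := by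
  obtain ⟨g, rfl⟩ := h
  have hg : ∀ g : ZMod 2 × ZMod 2, g + g = 0 := by decide
  ext z
  constructor
  · rintro ⟨k, rfl⟩
    exact ⟨k + g, act4_add _ _ _⟩
  · rintro ⟨k, rfl⟩
    refine ⟨k + g, ?_⟩
    rw [← act4_add, add_assoc, hg, add_zero]

lemma invTCcover4 : invTCcover act4 1 := by
  refine ⟨fun _ => univ, fun _ => isOpen_univ, iUnion_const _, fun _ => ⟨fun _ _ _ _ => mem_univ _, ?_⟩⟩
  let F₁ : C((↥X4 × ↥X4) × I, ↥X4) :=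
    ⟨fun q => H4 (q.1.1, q.2), H4_cont.comp (by fun_prop)⟩
  let F₂ : C((↥X4 × ↥X4) × I, ↥X4) :=
    ⟨fun q => H4 (q.1.2, σ q.2), H4_cont.comp (by fun_prop)⟩
  refine ⟨F₁.curry, F₂.curry, F₁.curry.continuous.continuousOn, F₂.curry.continuous.continuousOn,
    ?_, ?_⟩
  · intro p _
    refine ⟨H4_zero p.1, ?_, ?_⟩
    · change H4 (p.2, σ 1) = p.2
      rw [unitInterval.symm_one, H4_zero]
    · change orbit act4 (H4 (p.1, 1)) = orbit act4 (H4 (p.2, σ 0))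
      rw [unitInterval.symm_zero, orbit_eq (H4_one _), orbit_eq (H4_one _)]
  · intro g₁ g₂ p _ t
    exact ⟨H4_act g₁ p.1 t, H4_act g₂ p.2 (σ t)⟩

lemma invTC4 : invTC act4 = 1 := by
  apply le_antisymm
  · exact sInf_le ⟨1, by simp, le_rfl, invTCcover4⟩
  · apply le_sInf
    rintro _ ⟨m, rfl, hm, _⟩
    exact_mod_cast hm

lemma act4_a (x : ↥X4) :
    (act4 (1, 0) x : ℝ × ℝ) = (-(x : ℝ × ℝ).1, (x : ℝ × ℝ).2) := by
  apply Prod.ext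
  · rw [act4_fst]; simp [sgn_one]
  · rw [act4_snd]; simp [sgn_zero]

lemma act4_b (x : ↥X4) :
    (act4 (0, 1) x : ℝ × ℝ) = ((x : ℝ × ℝ).1, -(x : ℝ × ℝ).2) := by
  apply Prod.ext
  · rw [act4_fst]; simp [sgn_zero]
  · rw [act4_snd]; simp [sgn_one]

lemma fixB_eq : fixB = {x : ↥X4 | (x : ℝ × ℝ) = (1, 0) ∨ (x : ℝ × ℝ) = (-1, 0)} := by
  ext x
  constructor
  · intro h
    have h1 := h (0, 1) (AddSubgroup.mem_zmultiples _)
    have h2 : (x : ℝ × ℝ).2 = 0 := by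
      have := congrArg (fun z : ↥X4 => (z : ℝ × ℝ).2) h1
      simp only [act4_b] at this
      linarith
    have h3 := x.2.1
    rw [h2] at h3
    have h : (x : ℝ × ℝ).1 = 1 ∨ (x : ℝ × ℝ).1 = -1 := by
      apply eq_or_of_sq h3
    rcases h with h | h
    · exact Or.inl (Prod.ext h h2)
    · exact Or.inr (Prod.ext h h2)
  · intro h g hg
    have h2 : (x : ℝ × ℝ).2 = 0 := by rcases h with h | h <;> rw [h]
    have hg1 : g.1 = 0 := by
      obtain ⟨n, rfl⟩ := AddSubgroup.mem_zmultiples_iff.mp hg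
      simp
    apply Subtype.ext
    apply Prod.ext
    · rw [act4_fst, hg1, sgn_zero, one_mul]
    · rw [act4_snd, h2, mul_zero]

lemma no_path (f : C(I, ↥X4)) (h0 : f 0 = e4) (h1 : f 1 = f4) : False := by
  have hc : Continuous fun t => (f t : ℝ × ℝ).1 := by fun_prop
  have h := mem_range_of_exists_le_of_exists_ge hc (c := 0)
    ⟨1, by rw [h1]; simp [f4]⟩ ⟨0, by rw [h0]; simp [e4]⟩
  obtain ⟨t, ht⟩ := h
  exact X4_ne (f t).2 ht

lemma e4_mem : e4 ∈ fixB := by rw [fixB_eq]; exact Or.inl rfl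

lemma f4_mem : f4 ∈ fixB := by rw [fixB_eq]; exact Or.inr rfl

lemma not_pc : ¬ IsPathConnected fixB := by
  intro h
  obtain ⟨γ, _⟩ := h.joinedIn e4 e4_mem f4 f4_mem
  exact no_path γ.toContinuousMap γ.source γ.target

lemma TC_fixB : TC ↥fixB = ⊤ := by
  unfold TC minCover
  rw [sInf_eq_top]
  rintro _ ⟨m, rfl, _, U, _, hU, hs⟩
  exfalso
  have hp : ((⟨e4, e4_mem⟩, ⟨f4, f4_mem⟩) : ↥fixB × ↥fixB) ∈ ⋃ i, U i := by
    rw [hU]; exact mem_univ _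
  obtain ⟨i, hi⟩ := mem_iUnion.mp hp
  obtain ⟨s, _, hs⟩ := hs i
  obtain ⟨h0, h1⟩ := hs _ hi
  refine no_path ⟨fun t => ((s (⟨e4, e4_mem⟩, ⟨f4, f4_mem⟩) t : ↥fixB) : ↥X4), by fun_prop⟩ ?_ ?_
  · exact congrArg Subtype.val h0
  · exact congrArg Subtype.val h1

/-- For `G = ℤ/2 ⊕ ℤ/2 = ⟨a, b⟩` acting on `X = S¹ ∖ {(0,1), (0,-1)}` by
`a·(x,y) = (-x,y)` and `b·(x,y) = (x,-y)`: `act4` is a continuous action realizing these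
formulas, `X` is `G`-contractible and `TC^G(X) = 1`, while the fixed point set of `⟨b⟩` is
the two-point set `{(1,0), (-1,0)}`, which is not path-connected, so `TC(X^{⟨b⟩}) = ∞`;
in particular `TC(X^H) ≤ TC^G(X)` fails in general. -/
theorem example_G_contractible_with_disconnected_fixed_set :
    (∀ x, act4 0 x = x) ∧
    (∀ g h x, act4 (g + h) x = act4 g (act4 h x)) ∧
    (∀ g, Continuous (act4 g)) ∧
    (∀ x : ↥X4, (act4 (1, 0) x : ℝ × ℝ) = (-(x : ℝ × ℝ).1, (x : ℝ × ℝ).2)) ∧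
    (∀ x : ↥X4, (act4 (0, 1) x : ℝ × ℝ) = ((x : ℝ × ℝ).1, -(x : ℝ × ℝ).2)) ∧
    GContractible act4 ∧
    invTC act4 = 1 ∧
    fixB = {x : ↥X4 | (x : ℝ × ℝ) = (1, 0) ∨ (x : ℝ × ℝ) = (-1, 0)} ∧
    ¬ IsPathConnected fixB ∧
    TC ↥fixB = ⊤ ∧
    ¬ TC ↥fixB ≤ invTC act4 := by
  refine ⟨act4_zero, act4_add, act4_cont, act4_a, act4_b,
    ⟨H4, H4_cont, H4_zero, H4_act, e4, H4_one⟩, invTC4, fixB_eq, not_pc, TC_fixB, ?_⟩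
  rw [TC_fixB, invTC4]
  simp

end PaperTC
end

section
/- Let G be a finite group acting linearly on the sphere S^n (n ≥ 1), i.e. via an orthogonal representation ρ : G → O(n+1) restricted to the unit sphere S^n ⊆ ℝ^{n+1}, and suppose (S^n)^G ≠ ∅. Then cat_G(S^n) = 2. -/
open Set unitInterval

namespace PaperTC

/-- The unit sphere `S^n ⊆ ℝ^{n+1}` (with the Euclidean metric). -/
abbrev Sph (n : ℕ) : Set (EuclideanSpace ℝ (Fin (n + 1))) := Metric.sphere 0 1

/-- The action of `G` on the unit sphere `S^n` obtained by restricting an orthogonal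
representation of `G` on `ℝ^{n+1}`. -/
noncomputable def sphereAct {G : Type*} [Monoid G] {n : ℕ}
    (ρ : G →* (EuclideanSpace ℝ (Fin (n + 1)) ≃ₗᵢ[ℝ] EuclideanSpace ℝ (Fin (n + 1)))) :
    G → ↥(Sph n) → ↥(Sph n) := fun g x =>
  ⟨ρ g x, mem_sphere_zero_iff_norm.mpr (by
    rw [(ρ g).norm_map]; exact mem_sphere_zero_iff_norm.mp x.2)⟩

end PaperTC

open PaperTC

section Rogers
variable {E : Type*} [NormedAddCommGroup E] [InnerProductSpace ℝ E] [FiniteDimensional ℝ E]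

theorem aux_poly (A : E →L[ℝ] E) : ∃ p : Polynomial ℝ, p.natDegree ≤ Module.finrank ℝ E ∧
    ∀ t : ℝ, p.eval t = (ContinuousLinearMap.id ℝ E + t • A).det := by
  let b := Module.finBasis ℝ E
  let M := LinearMap.toMatrix b b (A : E →ₗ[ℝ] E)
  refine ⟨((Polynomial.X : Polynomial ℝ) • M.map Polynomial.C +
    (1 : Matrix _ _ ℝ).map Polynomial.C).det, ?_, ?_⟩
  · simpa using Polynomial.natDegree_det_X_add_C_le M 1
  · intro t
    rw [ContinuousLinearMap.det, ← LinearMap.det_toMatrix b, ← Polynomial.coe_evalRingHom,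
      RingHom.map_det]
    congr 1
    ext i j
    simp [M, Matrix.one_apply, LinearMap.toMatrix_apply]
    by_cases h : i = j
    · subst h; simp; ring
    · simp [h]; ring

theorem aux_interp (ε : ℝ) (hε : 0 < ε) (d : ℕ) : ∃ (t c : ℕ → ℝ),
    (∀ i ∈ Finset.range (d + 1), 0 < t i ∧ t i ≤ ε) ∧ ∑ i ∈ Finset.range (d + 1), c i = 1 ∧
    ∀ p : Polynomial ℝ, p.natDegree ≤ d →
      p.eval 1 = ∑ i ∈ Finset.range (d + 1), c i * p.eval (t i) := by
  let t : ℕ → ℝ := fun i => ε / (i + 1)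
  have hinj : Set.InjOn t (Finset.range (d + 1)) := by
    intro i _ j _ h
    simp only [t] at h
    have h1 : (i : ℝ) + 1 ≠ 0 := by positivity
    have h2 : (j : ℝ) + 1 ≠ 0 := by positivity
    field_simp at h
    have : (i : ℝ) = j := by linarith
    exact_mod_cast this
  refine ⟨t, fun i => (Lagrange.basis (Finset.range (d + 1)) t i).eval 1, ?_, ?_, ?_⟩
  · intro i _
    refine ⟨by positivity, div_le_self hε.le (by linarith [(Nat.cast_nonneg i : (0:ℝ) ≤ i)])⟩
  · rw [← Polynomial.eval_finsetSum, Lagrange.sum_basis hinj (by simp)]; simp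
  · intro p hp
    have h := Lagrange.eq_interpolate (s := Finset.range (d + 1)) (f := p) hinj (by
      rw [Finset.card_range]
      exact lt_of_le_of_lt Polynomial.degree_le_natDegree (by exact_mod_cast Nat.lt_succ_of_le hp))
    conv_lhs => rw [h]
    rw [Lagrange.interpolate_apply, Polynomial.eval_finsetSum]
    refine Finset.sum_congr rfl fun i _ => ?_
    simp [mul_comm]

theorem aux_det_zero (f : E → E) (hf : ContDiff ℝ 1 f) (h1 : ∀ x, ‖f x‖ = 1) (x : E) :
    (fderiv ℝ f x).det = 0 := by
  by_contra hne
  have hs : Function.Surjective (fderiv ℝ f x : E →ₗ[ℝ] E) :=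
    ((fderiv ℝ f x : E →ₗ[ℝ] E).equivOfDetNeZero hne).surjective
  obtain ⟨v, hv⟩ := hs (f x)
  have hd : HasFDerivAt f (fderiv ℝ f x) x :=
    (hf.differentiable (by norm_num)).differentiableAt.hasFDerivAt
  have h2 := hd.inner ℝ hd
  have h3 : (fun y => inner ℝ (f y) (f y)) = fun _ => (1 : ℝ) := by
    funext y; rw [real_inner_self_eq_norm_sq, h1]; norm_num
  rw [h3] at h2
  have h4 := h2.unique (hasFDerivAt_const (1:ℝ) x)
  have h5 := congrArg (fun L : E →L[ℝ] ℝ => L v) h4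
  have hv' : (fderiv ℝ f x) v = f x := hv
  simp [hv', h1] at h5

theorem aux_lip (f : E → E) (hf : ContDiff ℝ 1 f) (hs : ∀ x, ‖x‖ = 1 → f x = x) :
    ∃ K : NNReal, LipschitzWith K (fun x => if ‖x‖ < 1 then f x - x else 0) := by
  obtain ⟨K, hK⟩ := (hf.sub contDiff_id).contDiffOn.exists_lipschitzOnWith (by norm_num)
    (convex_closedBall (0:E) 1) (isCompact_closedBall (0:E) 1)
  refine ⟨K, ?_⟩
  have key : ∀ x y : E, ‖x‖ < 1 → ¬ ‖y‖ < 1 → ‖f x - x‖ ≤ K * ‖x - y‖ := by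
    intro x y hx hy
    have hc : ContinuousOn (fun s : ℝ => ‖x + s • (y - x)‖) (Icc 0 1) := by fun_prop
    obtain ⟨s, hs1, hs2⟩ := intermediate_value_Icc (zero_le_one) hc
      (show (1:ℝ) ∈ Icc _ _ by simp; exact ⟨hx.le, not_lt.1 hy⟩)
    simp only at hs2
    have := hK.norm_sub_le (show x ∈ Metric.closedBall (0:E) 1 by simpa using hx.le)
      (show x + s • (y - x) ∈ Metric.closedBall (0:E) 1 by simpa using hs2.le)
    simp only [id, hs _ hs2, sub_self, sub_zero] at this
    refine this.trans ?_
    gcongr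
    have : x - (x + s • (y - x)) = s • (x - y) := by module
    rw [this, norm_smul, Real.norm_eq_abs, abs_of_nonneg hs1.1]
    exact mul_le_of_le_one_left (norm_nonneg _) hs1.2
  refine LipschitzWith.of_dist_le_mul fun x y => ?_
  rw [dist_eq_norm, dist_eq_norm]
  by_cases hx : ‖x‖ < 1 <;> by_cases hy : ‖y‖ < 1
  · simp only [hx, hy, if_true]
    exact hK.norm_sub_le (by simpa using hx.le) (by simpa using hy.le)
  · simpa [hx, hy] using key x y hx hy
  · rw [norm_sub_rev x y]
    simpa [hx, hy, norm_sub_rev (f y) y] using key y x hy hx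
  · simp [hx, hy]; positivity

theorem aux_image (h : E → E) (K : NNReal) (hK : LipschitzWith K h) (h0 : ∀ x, ¬ ‖x‖ < 1 → h x = 0)
    (t : ℝ) (ht : 0 < t) (htK : t * K < 1) :
    Function.Injective (fun x => x + t • h x) ∧
    (fun x => x + t • h x) '' Metric.ball 0 1 = Metric.ball 0 1 := by
  let e : E ≃L[ℝ] E := ContinuousLinearEquiv.refl ℝ E
  have hA : ApproximatesLinearOn (fun x => x + t • h x) (e : E →L[ℝ] E) univ
      (t.toNNReal * K) := by
    rw [ApproximatesLinearOn.approximatesLinearOn_iff_lipschitzOnWith]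
    have : (fun x => x + t • h x) - ⇑(e : E →L[ℝ] E) = fun x => t • h x := by
      funext x; simp [e]
    rw [this]
    refine (LipschitzWith.of_dist_le_mul fun x y => ?_).lipschitzOnWith
    rw [dist_smul₀, Real.norm_eq_abs, abs_of_pos ht]
    have := hK.dist_le_mul x y
    rw [NNReal.coe_mul, Real.coe_toNNReal t ht.le, mul_assoc]
    exact mul_le_mul_of_nonneg_left this ht.le
  have hc : Subsingleton E ∨ (t.toNNReal * K : NNReal) < ‖(e.symm : E →L[ℝ] E)‖₊⁻¹ := by
    rcases subsingleton_or_nontrivial E with hE | hE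
    · exact Or.inl hE
    · right
      have : ‖(e.symm : E →L[ℝ] E)‖₊ = 1 := by
        have : (e.symm : E →L[ℝ] E) = ContinuousLinearMap.id ℝ E := rfl
        rw [this]; ext; simp
      rw [this, inv_one]
      rw [← NNReal.coe_lt_coe, NNReal.coe_mul, Real.coe_toNNReal t ht.le]
      exact htK
  have hinj : Function.Injective (fun x => x + t • h x) := by
    have := hA.injOn hc
    exact injOn_univ.1 this
  have hsur := hA.surjective hc
  refine ⟨hinj, ?_⟩
  have hout : ∀ x, ¬ ‖x‖ < 1 → x + t • h x = x := fun x hx => by simp [h0 x hx]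
  ext y
  simp only [mem_image, Metric.mem_ball, dist_zero_right]
  constructor
  · rintro ⟨x, hx, rfl⟩
    by_contra hy
    have h1 := hout _ hy
    have h2 := hinj h1
    rw [h2] at hy; exact hy hx
  · intro hy
    obtain ⟨x, hx⟩ := hsur y
    refine ⟨x, ?_, hx⟩
    by_contra hxn
    have := hout x hxn
    simp only at hx
    rw [this] at hx
    subst hx; exact hxn hy

theorem rogers [MeasurableSpace E] [BorelSpace E] [Nontrivial E]
    (f : E → E) (hf : ContDiff ℝ 1 f) (h1 : ∀ x, ‖f x‖ = 1)
    (hs : ∀ x, ‖x‖ = 1 → f x = x) : False := by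
  obtain ⟨K, hK⟩ := aux_lip f hf hs
  set h : E → E := fun x => if ‖x‖ < 1 then f x - x else 0 with hh
  let A : E → E →L[ℝ] E := fun x => fderiv ℝ f x - ContinuousLinearMap.id ℝ E
  have hAc : Continuous A := (hf.continuous_fderiv (by norm_num)).sub continuous_const
  obtain ⟨C, hC⟩ := (isCompact_closedBall (0:E) 1).exists_bound_of_continuousOn hAc.continuousOn
  have hC0 : 0 ≤ C := (norm_nonneg _).trans (hC 0 (by simp))
  -- positivity of the determinant near the identity
  have hcont : Continuous (fun B : E →L[ℝ] E => (ContinuousLinearMap.id ℝ E + B).det) :=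
    ContinuousLinearMap.continuous_det.comp (continuous_const.add continuous_id)
  have hpos : ∀ᶠ B in nhds (0 : E →L[ℝ] E), 0 < (ContinuousLinearMap.id ℝ E + B).det := by
    refine hcont.continuousAt.eventually (lt_mem_nhds ?_)
    simp [ContinuousLinearMap.det]
  obtain ⟨δ, hδ, hδp⟩ := Metric.eventually_nhds_iff.1 hpos
  let ε : ℝ := min (δ / (2 * (C + 1))) (1 / (2 * (K + 1)))
  have hε : 0 < ε := by positivity
  obtain ⟨t, c, ht, hc, hp⟩ := aux_interp ε hε (Module.finrank ℝ E)
  let μ : MeasureTheory.Measure E := MeasureTheory.Measure.addHaar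
  let B := Metric.ball (0:E) 1
  have hdet : ∀ s : ℝ, 0 < s → s ≤ ε → ∀ x ∈ B, 0 < (ContinuousLinearMap.id ℝ E + s • A x).det := by
    intro s hs0 hsε x hx
    apply hδp
    rw [dist_zero_right, norm_smul, Real.norm_eq_abs, abs_of_pos hs0]
    have h2 : ‖A x‖ ≤ C := hC x (Metric.ball_subset_closedBall hx)
    have h3 : s ≤ δ / (2 * (C + 1)) := hsε.trans (min_le_left _ _)
    calc s * ‖A x‖ ≤ δ / (2 * (C + 1)) * C := by gcongr
      _ < δ := by
        rw [div_mul_eq_mul_div, div_lt_iff₀ (by positivity)]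
        nlinarith
  have hvol : ∀ s : ℝ, 0 < s → s ≤ ε →
      ∫ x in B, (ContinuousLinearMap.id ℝ E + s • A x).det ∂μ = μ.real B := by
    intro s hs0 hsε
    have hsK : s * K < 1 := by
      have h3 : s ≤ 1 / (2 * (K + 1)) := hsε.trans (min_le_right _ _)
      calc s * K ≤ 1 / (2 * (K + 1)) * K := by gcongr
        _ < 1 := by
          rw [div_mul_eq_mul_div, div_lt_iff₀ (by positivity)]
          nlinarith [K.2]
    obtain ⟨hi, him⟩ := aux_image h K hK (fun x hx => by simp [hh, hx]) s hs0 hsK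
    have hder : ∀ x ∈ B, HasFDerivWithinAt (fun x => x + s • h x)
        (ContinuousLinearMap.id ℝ E + s • A x) B x := by
      intro x hx
      have hd : HasFDerivAt f (fderiv ℝ f x) x :=
        (hf.differentiable (by norm_num)).differentiableAt.hasFDerivAt
      have h2 : HasFDerivAt (fun x => x + s • (f x - x))
        (ContinuousLinearMap.id ℝ E + s • A x) x :=
        (hasFDerivAt_id x).add ((hd.sub (hasFDerivAt_id x)).const_smul s)
      refine h2.hasFDerivWithinAt.congr (fun y hy => ?_) ?_
      · have : ‖y‖ < 1 := by simpa [B] using hy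
        simp [hh, this]
      · have : ‖x‖ < 1 := by simpa [B] using hx
        simp [hh, this]
    have hI := MeasureTheory.integral_image_eq_integral_abs_det_fderiv_smul μ
      (Metric.isOpen_ball.measurableSet) hder hi.injOn (fun _ => (1:ℝ))
    rw [him] at hI
    simp only [smul_eq_mul, mul_one, MeasureTheory.integral_const, MeasurableSet.univ,
      MeasureTheory.measureReal_restrict_apply, univ_inter] at hI
    rw [show μ.real B = _ from hI]
    refine MeasureTheory.setIntegral_congr_fun Metric.isOpen_ball.measurableSet fun x hx => ?_
    exact (abs_of_pos (hdet s hs0 hsε x hx)).symm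
  have hint : ∀ s : ℝ, MeasureTheory.IntegrableOn
      (fun x => (ContinuousLinearMap.id ℝ E + s • A x).det) B μ := by
    intro s
    have : Continuous (fun x => (ContinuousLinearMap.id ℝ E + s • A x).det) :=
      hcont.comp (hAc.const_smul s)
    exact (this.continuousOn.integrableOn_compact (isCompact_closedBall (0:E) 1)).mono_set
      Metric.ball_subset_closedBall
  have hpt : ∀ x, 0 = ∑ i ∈ Finset.range (Module.finrank ℝ E + 1),
      c i * (ContinuousLinearMap.id ℝ E + t i • A x).det := by
    intro x
    obtain ⟨p, hpd, hpe⟩ := aux_poly (A x)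
    have := hp p hpd
    simp only [hpe] at this
    rw [← this, one_smul]
    simp only [A, add_sub_cancel]
    exact (aux_det_zero f hf h1 x).symm
  have hfin : (0:ℝ) = μ.real B := by
    calc (0:ℝ) = ∫ x in B, (0:ℝ) ∂μ := by simp
      _ = ∫ x in B, ∑ i ∈ Finset.range (Module.finrank ℝ E + 1),
            c i * (ContinuousLinearMap.id ℝ E + t i • A x).det ∂μ := by
          congr 1; funext x; exact hpt x
      _ = ∑ i ∈ Finset.range (Module.finrank ℝ E + 1), c i * μ.real B := by
          rw [MeasureTheory.integral_finsetSum _ (fun i _ => (hint (t i)).const_mul (c i))]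
          refine Finset.sum_congr rfl fun i hi => ?_
          rw [MeasureTheory.integral_const_mul, hvol _ (ht i hi).1 (ht i hi).2]
      _ = μ.real B := by rw [← Finset.sum_mul, hc, one_mul]
  have : 0 < μ.real B := by
    rw [MeasureTheory.measureReal_def]
    exact ENNReal.toReal_pos (Metric.measure_ball_pos μ 0 one_pos).ne' 
      (MeasureTheory.measure_ball_lt_top).ne
  linarith

theorem no_contraction [MeasurableSpace E] [BorelSpace E] [Nontrivial E]
    (H : Metric.sphere (0:E) 1 × I → Metric.sphere (0:E) 1) (hH : Continuous H)
    (h0 : ∀ x, H (x, 0) = x) (c : Metric.sphere (0:E) 1) (hc : ∀ x, H (x, 1) = c) : False := by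
  classical
  let nrm : E → Metric.sphere (0:E) 1 := fun x =>
    if hx : x = 0 then c else ⟨‖x‖⁻¹ • x, by simp [norm_smul, hx]⟩
  let F : E → E := fun x =>
    (max 1 ‖x‖) • (H (nrm x, projIcc 0 1 zero_le_one (2 - 2 * ‖x‖)) : E)
  have hnrm : ∀ x : E, x ≠ 0 → ContinuousAt nrm x := by
    intro x hx
    rw [Topology.IsInducing.subtypeVal.continuousAt_iff]
    have h2 : ContinuousAt (fun y : E => ‖y‖⁻¹ • y) x :=
      (continuous_norm.continuousAt.inv₀ (norm_ne_zero_iff.2 hx)).smul continuousAt_id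
    refine h2.congr ?_
    filter_upwards [isOpen_ne.mem_nhds hx] with y hy
    have hy : y ≠ 0 := hy
    simp [nrm, hy]
  have hF : Continuous F := by
    rw [continuous_iff_continuousAt]
    intro x
    by_cases hx : x = 0
    · subst hx
      have : F =ᶠ[nhds 0] fun _ => (c : E) := by
        filter_upwards [Metric.ball_mem_nhds (0:E) (show (0:ℝ) < 1/2 by norm_num)] with y hy
        have hy : ‖y‖ < 1/2 := by simpa using hy
        have h2 : projIcc (0:ℝ) 1 zero_le_one (2 - 2 * ‖y‖) = 1 :=
          projIcc_of_right_le _ (by linarith)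
        simp only [F, h2, hc, max_eq_left (show ‖y‖ ≤ 1 by linarith), one_smul]
      exact continuousAt_const.congr this.symm
    · refine ContinuousAt.smul (by fun_prop) ?_
      refine continuous_subtype_val.continuousAt.comp (hH.continuousAt.comp ?_)
      exact (hnrm x hx).prodMk (continuous_projIcc.comp (by fun_prop)).continuousAt
  have hFn : ∀ x, 1 ≤ ‖F x‖ := by
    intro x
    simp only [F, norm_smul, norm_eq_of_mem_sphere, mul_one, Real.norm_eq_abs]
    exact (le_max_left _ _).trans (le_abs_self _)
  have hFid : ∀ x : E, 1 ≤ ‖x‖ → F x = x := by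
    intro x hx
    have hx0 : x ≠ 0 := by rintro rfl; norm_num at hx
    have h2 : projIcc (0:ℝ) 1 zero_le_one (2 - 2 * ‖x‖) = 0 :=
      projIcc_of_le_left _ (by linarith)
    simp only [F, h2, h0, max_eq_right hx, nrm, hx0, dif_neg, not_false_eq_true]
    rw [smul_smul, mul_inv_cancel₀ (norm_ne_zero_iff.2 hx0), one_smul]
  obtain ⟨g, hg, hgd, hgs⟩ := (hF.sub continuous_id).exists_contDiff_approx 1
    (ε := fun _ => (1/2 : ℝ)) continuous_const (fun _ => by norm_num)
  have hne : ∀ x, x + g x ≠ 0 := by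
    intro x hx
    have h2 := hgd x
    rw [eq_neg_of_add_eq_zero_right hx, dist_eq_norm] at h2
    have h3 : -x - (F x - x) = -F x := by abel
    simp only [id, Pi.sub_apply] at h2
    rw [h3, norm_neg] at h2
    linarith [hFn x]
  have hsm : ContDiff ℝ 1 (fun x => x + g x) := contDiff_id.add hg
  refine rogers (fun x => ‖x + g x‖⁻¹ • (x + g x)) ?_ ?_ ?_
  · exact ((hsm.norm ℝ hne).inv (fun x => norm_ne_zero_iff.2 (hne x))).smul hsm
  · intro x
    rw [norm_smul, norm_inv, norm_norm, inv_mul_cancel₀ (norm_ne_zero_iff.2 (hne x))]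
  · intro x hx
    have : g x = 0 := by
      by_contra hgx
      exact hgs hgx (by simp [hFid x hx.ge])
    simp [this, hx]

end Rogers

theorem aux_categorical {G : Type*} [Group G] {n : ℕ}
    (ρ : G →* (EuclideanSpace ℝ (Fin (n + 1)) ≃ₗᵢ[ℝ] EuclideanSpace ℝ (Fin (n + 1))))
    (q : ↥(Sph n)) (hq : ∀ g, ρ g (q : EuclideanSpace ℝ (Fin (n + 1))) = q) :
    GCategorical (sphereAct ρ) {x : ↥(Sph n) | (x : EuclideanSpace ℝ (Fin (n + 1))) ≠ -q} := by
  classical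
  let L : ↥(Sph n) × I → EuclideanSpace ℝ (Fin (n + 1)) := fun p =>
    (1 - (p.2 : ℝ)) • (p.1 : EuclideanSpace ℝ (Fin (n + 1))) + (p.2 : ℝ) • (q : EuclideanSpace ℝ (Fin (n + 1)))
  have hLc : Continuous L := by fun_prop
  have hL : ∀ (x : ↥(Sph n)) (t : I), (x : EuclideanSpace ℝ (Fin (n + 1))) ≠ -q → L (x, t) ≠ 0 := by
    intro x t hx h
    have h1 : (1 - (t : ℝ)) • (x : EuclideanSpace ℝ (Fin (n + 1))) =
      -((t : ℝ) • (q : EuclideanSpace ℝ (Fin (n + 1)))) := eq_neg_of_add_eq_zero_left h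
    have h2 := congrArg norm h1
    rw [norm_neg, norm_smul, norm_smul, norm_eq_of_mem_sphere, norm_eq_of_mem_sphere,
      Real.norm_eq_abs, Real.norm_eq_abs, abs_of_nonneg t.2.1,
      abs_of_nonneg (sub_nonneg.2 t.2.2)] at h2
    have h3 : (t : ℝ) = 1 / 2 := by linarith
    rw [h3, ← smul_neg, show (1 : ℝ) - 1 / 2 = 1 / 2 by norm_num] at h1
    exact hx (smul_right_injective _ (show (1 / 2 : ℝ) ≠ 0 by norm_num) h1)
  have hLg : ∀ g x t, L (sphereAct ρ g x, t) = ρ g (L (x, t)) := by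
    intro g x t
    simp [L, sphereAct, hq]
  let H : ↥(Sph n) × I → ↥(Sph n) := fun p =>
    if h : L p = 0 then p.1 else ⟨‖L p‖⁻¹ • L p, by simp [norm_smul, h]⟩
  have hHv : ∀ (x : ↥(Sph n)) (t : I), (x : EuclideanSpace ℝ (Fin (n + 1))) ≠ -q →
      (H (x, t) : EuclideanSpace ℝ (Fin (n + 1))) = ‖L (x, t)‖⁻¹ • L (x, t) := by
    intro x t hx
    simp [H, hL x t hx]
  have hinv : ∀ g (x : ↥(Sph n)), (x : EuclideanSpace ℝ (Fin (n + 1))) ≠ -q →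
      (sphereAct ρ g x : EuclideanSpace ℝ (Fin (n + 1))) ≠ -q := by
    intro g x hx h
    apply hx
    apply (ρ g).injective
    rw [map_neg, hq]
    exact h
  refine ⟨q, hinv, H, ?_, ?_, ?_, ?_⟩
  · rw [Topology.IsInducing.subtypeVal.continuousOn_iff]
    have : ContinuousOn (fun p => ‖L p‖⁻¹ • L p)
        ({x : ↥(Sph n) | (x : EuclideanSpace ℝ (Fin (n + 1))) ≠ -q} ×ˢ (univ : Set I)) :=
      (hLc.norm.continuousOn.inv₀ fun p hp => norm_ne_zero_iff.2 (hL p.1 p.2 hp.1)).smul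
        hLc.continuousOn
    exact this.congr fun p hp => hHv p.1 p.2 hp.1
  · intro x hx
    apply Subtype.ext
    rw [hHv x 0 hx]
    simp [L]
  · intro g x hx t
    apply Subtype.ext
    rw [hHv _ t (hinv g x hx), hLg]
    simp only [sphereAct]
    rw [hHv x t hx, LinearIsometryEquiv.norm_map, map_smul]
  · intro x hx
    refine ⟨1, ?_⟩
    apply Subtype.ext
    rw [hHv x 1 hx]
    simp [L, sphereAct]

/-- If a finite group `G` acts linearly on `S^n` (via an orthogonal
representation) with non-empty fixed point set, then `cat_G(S^n) = 2`. -/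
theorem catG_linear_sphere_eq_two {G : Type*} [Group G] [Finite G] (n : ℕ) (hn : 1 ≤ n)
    (ρ : G →* (EuclideanSpace ℝ (Fin (n + 1)) ≃ₗᵢ[ℝ] EuclideanSpace ℝ (Fin (n + 1))))
    (hfix : (fixedSet (sphereAct ρ)).Nonempty) :
    catG (sphereAct ρ) = 2 := by
  obtain ⟨q, hq⟩ := hfix
  have hq' : ∀ g, ρ g (q : EuclideanSpace ℝ (Fin (n + 1))) = q := fun g =>
    congrArg Subtype.val (hq g)
  apply le_antisymm
  · refine sInf_le ⟨2, rfl, by norm_num, ?_⟩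
    let q' : ↥(Sph n) := ⟨-q, by simp⟩
    refine ⟨![{x | (x : EuclideanSpace ℝ (Fin (n + 1))) ≠ -q},
      {x | (x : EuclideanSpace ℝ (Fin (n + 1))) ≠ -q'}], ?_, ?_, ?_⟩
    · intro i
      fin_cases i
      · exact isOpen_ne.preimage continuous_subtype_val
      · exact isOpen_ne.preimage continuous_subtype_val
    · rw [eq_univ_iff_forall]
      intro x
      rw [mem_iUnion]
      by_cases h : (x : EuclideanSpace ℝ (Fin (n + 1))) = -q
      · refine ⟨1, ?_⟩
        change (x : EuclideanSpace ℝ (Fin (n + 1))) ≠ -(-q)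
        rw [h]
        intro h2
        have h3 : (q : EuclideanSpace ℝ (Fin (n + 1))) = 0 := by
          have h4 : (2 : ℝ) • (q : EuclideanSpace ℝ (Fin (n + 1))) = 0 := by
            rw [two_smul]
            nth_rewrite 1 [← neg_neg (q : EuclideanSpace ℝ (Fin (n + 1)))]
            rw [← h2, neg_add_cancel]
          exact (smul_eq_zero.1 h4).resolve_left (by norm_num)
        have := norm_eq_of_mem_sphere q
        rw [h3] at this
        simp at this
      · exact ⟨0, h⟩
    · intro i
      fin_cases i
      · exact aux_categorical ρ q hq'
      · exact aux_categorical ρ q' (fun g => by simp [q', hq'])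
  · refine le_sInf ?_
    rintro _ ⟨m, rfl, hm, U, -, hU, hcat⟩
    by_contra hlt
    have hm1 : m = 1 := by
      have : m < 2 := by exact_mod_cast not_le.1 hlt
      omega
    subst hm1
    have hU0 : U 0 = univ := by
      rw [← hU]; ext x; simp
    obtain ⟨x₀, -, H, hc, h0, hg, h1⟩ := hcat 0
    rw [hU0] at hc h0 hg h1
    rw [univ_prod_univ, continuousOn_univ] at hc
    obtain ⟨g₀, hg₀⟩ := h1 q (mem_univ _)
    have hfx : ∀ g, sphereAct ρ g (H (q, 1)) = H (q, 1) := fun g => by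
      rw [← hg g q (mem_univ _) 1, hq g]
    have hmul : ∀ a b x, sphereAct ρ (a * b) x = sphereAct ρ a (sphereAct ρ b x) := by
      intro a b x; apply Subtype.ext; simp [sphereAct]
    refine no_contraction H hc (fun x => h0 x (mem_univ _)) (H (q, 1)) fun x => ?_
    obtain ⟨g, hgx⟩ := h1 x (mem_univ _)
    rw [← hgx, ← hfx (g * g₀⁻¹), ← hg₀, ← hmul, inv_mul_cancel_right]
end

section
/- Let G be a finite group acting linearly on the sphere S^n (n ≥ 1) via an orthogonal representation ρ : G → O(n+1), suppose S^n is G-connected and (S^n)^G ≠ ∅. Then 2 ≤ TC^G(S^n) ≤ 3. -/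
open Set unitInterval

open PaperTC



namespace TCaux
open MeasureTheory Metric

theorem exists_crossing {E : Type*} [NormedAddCommGroup E] [NormedSpace ℝ E] (x y : E)
    (hx : ‖x‖ ≤ 1) (hy : 1 < ‖y‖) : ∃ z : E, ‖z‖ = 1 ∧ ‖x - z‖ ≤ ‖x - y‖ := by
  have hc : ContinuousOn (fun s : ℝ => ‖x + s • (y - x)‖) (Icc 0 1) := by fun_prop
  have := intermediate_value_Icc (zero_le_one) hc
  obtain ⟨s, hs, hs1⟩ := this (show (1 : ℝ) ∈ _ by simpa using ⟨hx, hy.le⟩)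
  refine ⟨x + s • (y - x), hs1, ?_⟩
  rw [sub_add_cancel_left, norm_neg, norm_smul, norm_sub_rev y x, Real.norm_of_nonneg hs.1]
  exact mul_le_of_le_one_left (norm_nonneg _) hs.2

theorem det_poly {E : Type*} [NormedAddCommGroup E] [NormedSpace ℝ E] [FiniteDimensional ℝ E]
    (A : E →L[ℝ] E) : ∃ p : Polynomial ℝ, p.natDegree ≤ Module.finrank ℝ E ∧
      ∀ t : ℝ, p.eval t = (1 + t • A : E →L[ℝ] E).det := by
  classical
  let b := Module.finBasis ℝ E
  let M := LinearMap.toMatrix b b (A : E →ₗ[ℝ] E)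
  refine ⟨_, by simpa using Polynomial.natDegree_det_X_add_C_le M 1, fun t => ?_⟩
  have : (1 + t • A : E →L[ℝ] E).det = (1 + t • M).det := by
    rw [ContinuousLinearMap.det, ← LinearMap.det_toMatrix b]
    congr 1
    simp [M, LinearMap.toMatrix_one]
  rw [this, ← Polynomial.coe_evalRingHom, RingHom.map_det]
  congr 1
  ext i j
  by_cases h : i = j <;> simp [h, add_comm] <;> exact mul_comm _ _

section
variable {E : Type*} [NormedAddCommGroup E] [InnerProductSpace ℝ E] [FiniteDimensional ℝ E]
  [MeasurableSpace E] [BorelSpace E]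

theorem det_interp (f' : E → E →L[ℝ] E) (hf' : Continuous f') (c δ : ℝ) (hδ : 0 < δ)
    (h : ∀ t, 0 < t → t ≤ δ → ∫ x in closedBall (0:E) 1, (1 + t • f' x : E →L[ℝ] E).det = c) :
    ∫ x in closedBall (0:E) 1, (1 + f' x : E →L[ℝ] E).det = c := by
  classical
  let N := Module.finrank ℝ E
  let v : ℕ → ℝ := fun i => δ / (i + 1)
  let s := Finset.range (N + 1)
  have hv : Set.InjOn v s := by
    intro i _ j _ hij
    simp only [v] at hij
    have h1 : (i:ℝ) + 1 ≠ 0 := by positivity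
    have h2 : (j:ℝ) + 1 ≠ 0 := by positivity
    rw [div_eq_div_iff h1 h2] at hij
    have := mul_left_cancel₀ hδ.ne' hij
    exact_mod_cast (add_right_cancel this).symm
  let L : ℕ → ℝ := fun i => (Lagrange.basis s v i).eval 1
  have key : ∀ A : E →L[ℝ] E, (1 + A : E →L[ℝ] E).det = ∑ i ∈ s, L i * (1 + v i • A : E →L[ℝ] E).det := by
    intro A
    obtain ⟨p, hp, hpe⟩ := det_poly A
    have hd : p.degree < s.card := by
      refine lt_of_le_of_lt Polynomial.degree_le_natDegree ?_
      simp only [s, Finset.card_range]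
      exact_mod_cast Nat.lt_succ_of_le hp
    have h1 := congrArg (Polynomial.eval 1) (Lagrange.eq_interpolate hv hd)
    rw [Lagrange.interpolate_apply, Polynomial.eval_finsetSum] at h1
    simp only [hpe, Polynomial.eval_mul, Polynomial.eval_C, one_smul] at h1
    rw [h1]
    exact Finset.sum_congr rfl fun i _ => mul_comm _ _
  have hcont : ∀ t : ℝ, Continuous fun x => (1 + t • f' x : E →L[ℝ] E).det := fun t =>
    ContinuousLinearMap.continuous_det.comp (by fun_prop)
  rw [integral_congr_ae (Filter.Eventually.of_forall fun x => key (f' x))]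
  rw [integral_finsetSum]
  · simp_rw [integral_const_mul]
    have : ∀ i ∈ s, L i * ∫ x in closedBall (0:E) 1, (1 + v i • f' x : E →L[ℝ] E).det = L i * c := by
      intro i _
      rw [h (v i) (by positivity)]
      exact div_le_self hδ.le (by simp)
    rw [Finset.sum_congr rfl this, ← Finset.sum_mul]
    have h2 := congrArg (Polynomial.eval 1) (Lagrange.sum_basis hv ⟨0, by simp [s]⟩)
    rw [Polynomial.eval_finsetSum, Polynomial.eval_one] at h2
    rw [h2, one_mul]
  · intro i _
    exact ((continuous_const.mul (hcont (v i))).continuousOn).integrableOn_compact (isCompact_closedBall _ _)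

theorem no_smooth_retraction [Nontrivial E] (r : E → E) (hr : ContDiff ℝ 1 r)
    (hn : ∀ x, ‖r x‖ = 1) (hid : ∀ x, ‖x‖ = 1 → r x = x) : False := by
  let u : E → E := fun x => r x - x
  have hu : ContDiff ℝ 1 u := hr.sub contDiff_id
  have hu' : Continuous (fderiv ℝ u) := hu.continuous_fderiv (by simp)
  have hud : Differentiable ℝ u := hu.differentiable (by simp)
  obtain ⟨K, hK⟩ : ∃ K : NNReal, LipschitzOnWith K u (closedBall 0 1) := by
    obtain ⟨C, hC⟩ := (isCompact_closedBall (0:E) 1).exists_bound_of_continuousOn hu'.continuousOn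
    refine ⟨C.toNNReal, (convex_closedBall (0:E) 1).lipschitzOnWith_of_nnnorm_fderiv_le
      (fun x _ => hud x) fun x hx => ?_⟩
    exact NNReal.le_toNNReal_of_coe_le (hC x hx)
  let w : E → E := fun x => if ‖x‖ ≤ 1 then u x else 0
  have hmix : ∀ x y, ‖x‖ ≤ 1 → 1 < ‖y‖ → ‖u x‖ ≤ K * ‖x - y‖ := by
    intro x y hx hy
    obtain ⟨z, hz, hxz⟩ := exists_crossing x y hx hy
    have h0 : u z = 0 := by simp [u, hid z hz]
    have := hK.norm_sub_le (show x ∈ closedBall (0:E) 1 by simpa using hx)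
      (show z ∈ closedBall (0:E) 1 by simp [hz])
    rw [h0, sub_zero] at this
    exact this.trans (by gcongr)
  have hw : ∀ x y, ‖w x - w y‖ ≤ K * ‖x - y‖ := by
    intro x y
    by_cases hx : ‖x‖ ≤ 1 <;> by_cases hy : ‖y‖ ≤ 1 <;> simp only [w, hx, hy, if_true, if_false]
    · exact hK.norm_sub_le (by simpa using hx) (by simpa using hy)
    · simpa using hmix x y hx (not_le.mp hy)
    · rw [zero_sub, norm_neg, norm_sub_rev x y]; exact hmix y x hy (not_le.mp hx)
    · simp; positivity
  have hpos : ∀ᶠ t : ℝ in nhds 0, ∀ x ∈ closedBall (0:E) 1, 0 < (1 + t • fderiv ℝ u x : E →L[ℝ] E).det := by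
    refine (isCompact_closedBall (0:E) 1).eventually_forall_of_forall_eventually fun x _ => ?_
    have : Continuous fun z : ℝ × E => (1 + z.1 • fderiv ℝ u z.2 : E →L[ℝ] E).det :=
      ContinuousLinearMap.continuous_det.comp (by fun_prop)
    refine this.continuousAt.eventually (lt_mem_nhds ?_)
    simp only [zero_smul, add_zero]
    rw [ContinuousLinearMap.det]; simp
  obtain ⟨δ₀, hδ₀, hδ⟩ := Metric.eventually_nhds_iff.mp hpos
  let δ : ℝ := min (δ₀ / 2) (min 1 (1 / (2 * (K + 1))))
  have hKp : (0:ℝ) < K + 1 := by positivity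
  have hδp : 0 < δ := by simp only [δ, lt_min_iff]; refine ⟨by positivity, by positivity, by positivity⟩
  have hvol := det_interp (fderiv ℝ u) hu' (volume.real (closedBall (0:E) 1)) δ hδp ?_
  · have hz : ∀ x, (1 + fderiv ℝ u x : E →L[ℝ] E).det = 0 := by
      intro x
      have hrd : DifferentiableAt ℝ r x := hr.differentiable (by simp) x
      have h1 : (1 + fderiv ℝ u x : E →L[ℝ] E) = fderiv ℝ r x := by
        have : fderiv ℝ u x = fderiv ℝ r x - 1 := by
          have := (hrd.hasFDerivAt.sub (hasFDerivAt_id x)).fderiv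
          exact this
        rw [this]; abel
      rw [h1]
      by_contra hne
      have hunit : IsUnit (LinearMap.det (fderiv ℝ r x : E →ₗ[ℝ] E)) := isUnit_iff_ne_zero.mpr hne
      have hbij := ((Module.End.isUnit_iff _).mp ((LinearMap.isUnit_iff_isUnit_det _).mpr hunit)).2 (r x)
      obtain ⟨y, hy⟩ := hbij
      have hy' : fderiv ℝ r x y = r x := hy
      have h2 : HasFDerivAt (fun z => inner ℝ (r z) (r z)) _ x := hrd.hasFDerivAt.inner ℝ hrd.hasFDerivAt
      have h3 : (fun z => inner ℝ (r z) (r z)) = fun _ => (1:ℝ) := by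
        ext z; simp [hn]
      rw [h3] at h2
      have h4 := congrArg (fun f => f y) (h2.unique (hasFDerivAt_const (1:ℝ) x))
      simp [hy', hn] at h4
    simp only [hz, integral_zero] at hvol
    have : 0 < volume.real (closedBall (0:E) 1) := by
      rw [measureReal_def]
      exact ENNReal.toReal_pos (measure_closedBall_pos volume _ one_pos).ne' measure_closedBall_lt_top.ne
    exact this.ne hvol
  · intro t ht htδ
    have ht1 : t ≤ 1 := htδ.trans ((min_le_right _ _).trans (min_le_left _ _))
    have ht2 : t * K < 1 := by
      have : t ≤ 1 / (2 * (K + 1)) := htδ.trans ((min_le_right _ _).trans (min_le_right _ _))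
      rw [le_div_iff₀ (by positivity)] at this
      nlinarith [K.coe_nonneg]
    have ht0 : t < δ₀ := by
      have : t ≤ δ₀ / 2 := htδ.trans (min_le_left _ _)
      linarith
    have hdet := hδ (y := t) (by simpa [abs_of_pos ht] using ht0)
    let g : E → E := fun x => x + t • w x
    let c : NNReal := ⟨t, ht.le⟩ * K
    have happ : ApproximatesLinearOn g ((ContinuousLinearEquiv.refl ℝ E : E ≃L[ℝ] E) : E →L[ℝ] E) univ c := by
      intro x _ y _
      have : g x - g y - ((ContinuousLinearEquiv.refl ℝ E : E ≃L[ℝ] E) : E →L[ℝ] E) (x - y) = t • (w x - w y) := by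
        simp [g, smul_sub]; abel
      rw [this, norm_smul, Real.norm_of_nonneg ht.le]
      have := hw x y
      have hcc : (c : ℝ) = t * K := rfl
      rw [hcc, mul_assoc]
      gcongr
    have hc : Subsingleton E ∨ c < ‖((ContinuousLinearEquiv.refl ℝ E : E ≃L[ℝ] E).symm : E →L[ℝ] E)‖₊⁻¹ := by
      right
      have : ‖((ContinuousLinearEquiv.refl ℝ E : E ≃L[ℝ] E).symm : E →L[ℝ] E)‖₊ = 1 := by
        ext; simp
      rw [this, inv_one]
      exact_mod_cast ht2
    have hinj := happ.injOn hc
    have hsurj := happ.surjective hc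
    have himg : g '' closedBall 0 1 = closedBall 0 1 := by
      apply Subset.antisymm
      · rintro _ ⟨x, hx, rfl⟩
        have hx' : ‖x‖ ≤ 1 := by simpa using hx
        have : g x = (1 - t) • x + t • r x := by
          simp [g, w, hx', u, smul_sub, sub_smul]; abel
        rw [mem_closedBall_zero_iff, this]
        calc _ ≤ ‖(1 - t) • x‖ + ‖t • r x‖ := norm_add_le _ _
          _ = (1 - t) * ‖x‖ + t * 1 := by
            rw [norm_smul, norm_smul, hn, Real.norm_of_nonneg ht.le, Real.norm_of_nonneg (by linarith)]
          _ ≤ 1 := by nlinarith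
      · intro y hy
        obtain ⟨x, rfl⟩ := hsurj y
        by_cases hx : ‖x‖ ≤ 1
        · exact ⟨x, by simpa using hx, rfl⟩
        · exfalso; apply hx
          have : g x = x := by simp [g, w, hx]
          rw [this] at hy; simpa using hy
    have hder : ∀ x ∈ closedBall (0:E) 1, HasFDerivWithinAt g (1 + t • fderiv ℝ u x) (closedBall 0 1) x := by
      intro x hx
      have h1 : HasFDerivAt (fun x => x + t • u x) (1 + t • fderiv ℝ u x) x :=
        (hasFDerivAt_id x).add ((hud x).hasFDerivAt.const_smul t)
      refine h1.hasFDerivWithinAt.congr (fun y hy => ?_) ?_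
      · have : ‖y‖ ≤ 1 := by simpa using hy
        simp [g, w, this]
      · have : ‖x‖ ≤ 1 := by simpa using hx
        simp [g, w, this]
    have := integral_image_eq_integral_abs_det_fderiv_smul volume measurableSet_closedBall hder
      (hinj.mono (subset_univ _)) (fun _ => (1:ℝ))
    rw [himg] at this
    simp only [integral_const, smul_eq_mul, mul_one, measureReal_restrict_apply_univ] at this
    rw [this]
    exact setIntegral_congr_fun measurableSet_closedBall fun x hx => (abs_of_pos (hdet x hx)).symm

end

theorem sphere_not_contr {E : Type*} [NormedAddCommGroup E] [InnerProductSpace ℝ E]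
    [FiniteDimensional ℝ E] [Nontrivial E] (y0 : sphere (0:E) 1)
    (h : (ContinuousMap.id (sphere (0:E) 1)).Homotopic (ContinuousMap.const _ y0)) : False := by
  borelize E
  classical
  obtain ⟨H⟩ := h
  let nrm : E → sphere (0:E) 1 := fun v => if hv : v = 0 then y0 else
    ⟨‖v‖⁻¹ • v, by simp [norm_smul, hv]⟩
  have hnrm : ∀ v, v ≠ 0 → (nrm v : E) = ‖v‖⁻¹ • v := by
    intro v hv; simp [nrm, hv]
  have hnc : ∀ v, v ≠ 0 → ContinuousAt nrm v := by
    intro v hv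
    rw [Topology.IsInducing.subtypeVal.continuousAt_iff]
    have : ContinuousAt (fun v : E => ‖v‖⁻¹ • v) v :=
      (continuousAt_id.norm.inv₀ (by simpa using hv)).smul continuousAt_id
    refine this.congr ?_
    filter_upwards [isOpen_ne.mem_nhds hv] with w hw
    exact (hnrm w hw).symm
  let F : E → E := fun v => (max (1/2) ‖v‖) • (H (projIcc 0 1 zero_le_one (2 - 4 * ‖v‖), nrm v) : E)
  have hFid : ∀ v, 1/2 ≤ ‖v‖ → F v = v := by
    intro v hv
    have hv0 : v ≠ 0 := by rintro rfl; norm_num at hv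
    have : projIcc (0:ℝ) 1 zero_le_one (2 - 4 * ‖v‖) = 0 := projIcc_of_le_left _ (by linarith)
    simp only [F]
    rw [this, H.apply_zero, max_eq_right hv, ContinuousMap.id_apply, hnrm v hv0, smul_smul,
      mul_inv_cancel₀ (by simpa using hv0), one_smul]
  have hFn : ∀ v, 1/2 ≤ ‖F v‖ := by
    intro v
    simp only [F]
    rw [norm_smul, norm_eq_of_mem_sphere, mul_one]
    exact (le_max_left _ _).trans (le_abs_self _)
  have hFc : Continuous F := by
    rw [continuous_iff_continuousAt]
    intro v
    by_cases hv : v = 0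
    · subst hv
      have : ContinuousAt (fun _ : E => (1/2 : ℝ) • (y0 : E)) 0 := continuousAt_const
      refine this.congr ?_
      filter_upwards [ball_mem_nhds (0:E) (show (0:ℝ) < 1/4 by norm_num)] with w hw
      have hw' : ‖w‖ < 1/4 := by simpa using hw
      have : projIcc (0:ℝ) 1 zero_le_one (2 - 4 * ‖w‖) = 1 := projIcc_of_right_le _ (by linarith)
      simp only [F]
      rw [this, H.apply_one, max_eq_left (by linarith), ContinuousMap.const_apply]
    · have h1 : ContinuousAt (fun v : E => (projIcc (0:ℝ) 1 zero_le_one (2 - 4 * ‖v‖), nrm v)) v :=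
        ContinuousAt.prodMk (continuous_projIcc.comp (by fun_prop)).continuousAt (hnc v hv)
      have h2 := (continuous_subtype_val.comp H.continuous).continuousAt.comp h1
      exact ContinuousAt.smul (f := fun v : E => max (1/2) ‖v‖) (by fun_prop) h2
  obtain ⟨g, hg, hgd, hge, -⟩ := hFc.exists_contDiff_approx_and_eqOn 1 (ε := fun _ => 1/4)
    continuous_const (fun _ => by norm_num) (S := {x : E | 1 ≤ ‖x‖}) (U := {x : E | 1/2 < ‖x‖})
    (isClosed_le continuous_const continuous_norm)
    ((isOpen_lt continuous_const continuous_norm).mem_nhdsSet.mpr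
      (fun x (hx : 1 ≤ ‖x‖) => show 1/2 < ‖x‖ by linarith))
    (contDiffOn_id.congr fun x hx => hFid x (le_of_lt hx))
  have hg0 : ∀ x, g x ≠ 0 := by
    intro x hx
    have h1 := hgd x
    have h2 := hFn x
    rw [hx, dist_zero_left] at h1
    linarith
  refine no_smooth_retraction (fun x => ‖g x‖⁻¹ • g x) ?_ ?_ ?_
  · have : ContDiff ℝ 1 g := by exact_mod_cast hg
    exact ((this.norm ℝ hg0).inv (fun x => by simpa using hg0 x)).smul this
  · intro x; simp [norm_smul, hg0 x]
  · intro x hx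
    have : g x = x := (hge (show 1 ≤ ‖x‖ from hx.ge)).trans (hFid x (by rw [hx]; norm_num))
    simp [this, hx]
end TCaux

namespace TCaux
open PaperTC ContinuousMap

section upper
variable {G : Type*} {X : Type*} [TopologicalSpace X]

/-- Equivariance of a map defined on a subset. -/
def Equi (act : G → X → X) (V : Set X) (φ : C(V, X)) : Prop :=
  ∀ g (x : V) (h : act g x ∈ V), φ ⟨act g x, h⟩ = act g (φ x)

/-- Equivariantly contractible to the point `e` in `X`. -/
def Good (act : G → X → X) (e : X) (V : Set X) : Prop :=
  IsOpen V ∧ (∀ g x, x ∈ V → act g x ∈ V) ∧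
    HomotopicWith (⟨Subtype.val, continuous_subtype_val⟩ : C(V, X)) (const V e) (Equi act V)

theorem Good.planner {act : G → X → X} {e : X} {V : Set X} (h : Good act e V) :
    ∃ c : X → C(I, X), ContinuousOn c V ∧ (∀ x ∈ V, c x 0 = x ∧ c x 1 = e) ∧
      ∀ g x, x ∈ V → ∀ t, c (act g x) t = act g (c x t) := by
  classical
  obtain ⟨ho, hinv, ⟨F⟩⟩ := h
  let c : X → C(I, X) := fun x => if hx : x ∈ V then
    ⟨fun t => F (t, ⟨x, hx⟩), F.continuous.comp (by fun_prop)⟩ else const I e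
  have hc : ∀ x (hx : x ∈ V) t, c x t = F (t, ⟨x, hx⟩) := by
    intro x hx t; simp [c, hx]
  refine ⟨c, ?_, ?_, ?_⟩
  · rw [continuousOn_iff_continuous_domRestrict]
    apply ContinuousMap.continuous_of_continuous_uncurry
    have : Continuous fun p : V × I => F (p.2, p.1) := F.continuous.comp (by fun_prop)
    refine this.congr fun p => ?_
    exact (hc p.1 p.1.2 p.2).symm
  · intro x hx
    rw [hc x hx, hc x hx]
    exact ⟨F.apply_zero _, F.apply_one _⟩
  · intro g x hx t
    rw [hc x hx, hc _ (hinv g x hx)]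
    exact F.prop t g ⟨x, hx⟩ (hinv g x hx)

theorem invTCcover_of_good {act : G → X → X} {e : X} {k : ℕ} (V : Fin k → Set X)
    (hV : ∀ i, Good act e (V i)) (hcov : ∀ x y, ∃ i, x ∈ V i ∧ y ∈ V i) :
    invTCcover act k := by
  refine ⟨fun i => V i ×ˢ V i, fun i => (hV i).1.prod (hV i).1, ?_, fun i => ⟨?_, ?_⟩⟩
  · ext ⟨x, y⟩
    simpa using hcov x y
  · intro g₁ g₂ p hp
    exact ⟨(hV i).2.1 _ _ hp.1, (hV i).2.1 _ _ hp.2⟩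
  · obtain ⟨c, hc, h01, heq⟩ := (hV i).planner
    let rv : C(I, I) := ⟨unitInterval.symm, unitInterval.continuous_symm⟩
    refine ⟨fun p => c p.1, fun p => (c p.2).comp rv, ?_, ?_, ?_, ?_⟩
    · exact hc.comp continuousOn_fst fun p hp => hp.1
    · exact (ContinuousMap.continuous_precomp rv).comp_continuousOn
        (hc.comp continuousOn_snd fun p hp => hp.2)
    · intro p hp
      refine ⟨(h01 _ hp.1).1, ?_, ?_⟩
      · simp [rv, (h01 _ hp.2).1]
      · simp [rv, (h01 _ hp.2).2, (h01 _ hp.1).2]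
    · intro g₁ g₂ p hp t
      exact ⟨heq _ _ hp.1 t, heq _ _ hp.2 _⟩

theorem Good.move {act : G → X → X} {e e' : X} {V : Set X} (h : Good act e V)
    (he : JoinedIn (fixedSet act) e e') : Good act e' V := by
  refine ⟨h.1, h.2.1, h.2.2.trans ?_⟩
  obtain ⟨γ, hγ⟩ := he
  refine ⟨⟨⟨⟨fun p => γ p.1, by fun_prop⟩, by simp, by simp⟩, ?_⟩⟩
  intro t g x hx
  exact (hγ t g).symm

theorem Good.union {act : G → X → X} {e : X} {V W : Set X} (h : Good act e V)
    (h' : Good act e W) (hd : Disjoint V W) : Good act e (V ∪ W) := by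
  classical
  obtain ⟨ho, hinv, ⟨F⟩⟩ := h
  obtain ⟨ho', hinv', ⟨F'⟩⟩ := h'
  have hU : ∀ x, x ∈ V ∪ W → x ∉ V → x ∈ W := fun x hx hn => hx.resolve_left hn
  have hdis : ∀ x, x ∈ W → x ∉ V := fun x hx hn => Set.disjoint_left.mp hd hn hx
  let K : I × ↥(V ∪ W) → X := fun p => if hp : p.2.1 ∈ V then F (p.1, ⟨p.2.1, hp⟩) else
    F' (p.1, ⟨p.2.1, hU _ p.2.2 hp⟩)
  have hK1 : ∀ t x (hx : x ∈ V ∪ W) (h : x ∈ V), K (t, ⟨x, hx⟩) = F (t, ⟨x, h⟩) := by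
    intro t x hx h; simp [K, h]
  have hK2 : ∀ t x (hx : x ∈ V ∪ W) (h : x ∈ W), K (t, ⟨x, hx⟩) = F' (t, ⟨x, h⟩) := by
    intro t x hx h; simp [K, hdis x h]
  have hKc : Continuous K := by
    rw [continuous_iff_continuousAt]
    rintro ⟨t, x, hx⟩
    have o1 : IsOpen {p : I × ↥(V ∪ W) | p.2.1 ∈ V} := ho.preimage (by fun_prop)
    have o2 : IsOpen {p : I × ↥(V ∪ W) | p.2.1 ∈ W} := ho'.preimage (by fun_prop)
    rcases hx with hx1 | hx1
    · refine ContinuousOn.continuousAt ?_ (o1.mem_nhds hx1)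
      rw [continuousOn_iff_continuous_domRestrict]
      have : Continuous fun p : {p : I × ↥(V ∪ W) | p.2.1 ∈ V} => F (p.1.1, ⟨p.1.2.1, p.2⟩) :=
        F.continuous.comp (by fun_prop)
      exact this.congr fun p => (hK1 _ _ _ _).symm
    · refine ContinuousOn.continuousAt ?_ (o2.mem_nhds hx1)
      rw [continuousOn_iff_continuous_domRestrict]
      have : Continuous fun p : {p : I × ↥(V ∪ W) | p.2.1 ∈ W} => F' (p.1.1, ⟨p.1.2.1, p.2⟩) :=
        F'.continuous.comp (by fun_prop)
      exact this.congr fun p => (hK2 _ _ _ _).symm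
  refine ⟨ho.union ho', fun g x hx => hx.imp (hinv g x) (hinv' g x), ⟨⟨⟨⟨K, hKc⟩, ?_, ?_⟩, ?_⟩⟩⟩
  · rintro ⟨x, hx | hx⟩
    · exact (hK1 _ _ _ hx).trans (F.apply_zero _)
    · exact (hK2 _ _ _ hx).trans (F'.apply_zero _)
  · rintro ⟨x, hx | hx⟩
    · exact (hK1 _ _ _ hx).trans (F.apply_one _)
    · exact (hK2 _ _ _ hx).trans (F'.apply_one _)
  · rintro t g ⟨x, hx | hx⟩ hgx
    · refine (hK1 _ _ _ (hinv g x hx)).trans ?_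
      refine (F.prop t g ⟨x, hx⟩ (hinv g x hx)).trans ?_
      exact congrArg (act g) (hK1 t x (Or.inl hx) hx).symm
    · refine (hK2 _ _ _ (hinv' g x hx)).trans ?_
      refine (F'.prop t g ⟨x, hx⟩ (hinv' g x hx)).trans ?_
      exact congrArg (act g) (hK2 t x (Or.inr hx) hx).symm

theorem Good.mono {act : G → X → X} {e : X} {V W : Set X} (h : Good act e V) (hWV : W ⊆ V)
    (hW : IsOpen W) (hWi : ∀ g x, x ∈ W → act g x ∈ W) : Good act e W := by
  obtain ⟨ho, hinv, ⟨F⟩⟩ := h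
  refine ⟨hW, hWi, ⟨⟨⟨⟨fun p => F (p.1, ⟨p.2.1, hWV p.2.2⟩), F.continuous.comp (by fun_prop)⟩,
    ?_, ?_⟩, ?_⟩⟩⟩
  · intro x; exact F.apply_zero _
  · intro x; exact F.apply_one _
  · intro t g x hx
    exact F.prop t g ⟨x.1, hWV x.2⟩ (hWV hx)

end upper

section sphere
variable {G : Type*} [Group G] {n : ℕ}
    (ρ : G →* (EuclideanSpace ℝ (Fin (n + 1)) ≃ₗᵢ[ℝ] EuclideanSpace ℝ (Fin (n + 1))))

theorem act_coe (g : G) (x : Sph n) : (sphereAct ρ g x : EuclideanSpace ℝ (Fin (n + 1))) = ρ g x := rfl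

theorem good_geodesic (e : Sph n) (he : e ∈ fixedSet (sphereAct ρ)) :
    Good (sphereAct ρ) e {x | x ≠ -e} := by
  have hρe : ∀ g, ρ g (e : EuclideanSpace ℝ (Fin (n + 1))) = e := fun g => congrArg Subtype.val (he g)
  have hne : ∀ (t : I) (x : Sph n), x ≠ -e →
      (1 - (t:ℝ)) • (x : EuclideanSpace ℝ (Fin (n + 1))) + (t:ℝ) • (e : EuclideanSpace ℝ (Fin (n + 1))) ≠ 0 := by
    intro t x hx h0
    have h1 := eq_neg_of_add_eq_zero_left h0
    have h2 := congrArg norm h1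
    rw [norm_neg, norm_smul, norm_smul, norm_eq_of_mem_sphere, norm_eq_of_mem_sphere, mul_one, mul_one,
      Real.norm_of_nonneg (by linarith [t.2.2]), Real.norm_of_nonneg t.2.1] at h2
    rw [h2, ← smul_neg] at h1
    have ht : (t:ℝ) ≠ 0 := by intro h; rw [h] at h2; norm_num at h2
    apply hx
    ext1
    exact smul_right_injective _ ht h1
  let N : I × {x : Sph n | x ≠ -e} → EuclideanSpace ℝ (Fin (n + 1)) := fun p =>
    (1 - (p.1:ℝ)) • (p.2.1 : EuclideanSpace ℝ (Fin (n + 1))) + (p.1:ℝ) • (e : EuclideanSpace ℝ (Fin (n + 1)))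
  have hN : ∀ p, N p ≠ 0 := fun p => hne p.1 p.2.1 p.2.2
  have hNc : Continuous N := by fun_prop
  let F : I × {x : Sph n | x ≠ -e} → Sph n := fun p => ⟨‖N p‖⁻¹ • N p, by simp [norm_smul, hN p]⟩
  have hFc : Continuous F := Continuous.subtype_mk
    ((hNc.norm.inv₀ fun p => by simpa using hN p).smul hNc) _
  refine ⟨isOpen_ne, ?_, ⟨⟨⟨⟨F, hFc⟩, ?_, ?_⟩, ?_⟩⟩⟩
  · intro g x hx h
    apply hx
    ext1
    have h1 : ρ g x = -(e : EuclideanSpace ℝ (Fin (n + 1))) := congrArg Subtype.val h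
    apply (ρ g).injective
    rw [h1]
    show _ = ρ g (-(e : EuclideanSpace ℝ (Fin (n + 1))))
    rw [map_neg, hρe]
  · intro x
    ext1
    simp [F, N]
  · intro x
    ext1
    simp [F, N]
  · intro t g x hx
    have h1 : N (t, ⟨sphereAct ρ g x, hx⟩) = ρ g (N (t, x)) := by
      simp [N, act_coe, hρe]
    ext1
    show ‖N (t, ⟨sphereAct ρ g x, hx⟩)‖⁻¹ • N (t, ⟨sphereAct ρ g x, hx⟩) = ρ g (‖N (t, x)‖⁻¹ • N (t, x))
    rw [h1, (ρ g).norm_map, map_smul]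

theorem upper (hconn : ∀ H : Subgroup G, IsPathConnected (fixedSetOf (sphereAct ρ) (H : Set G)))
    (hfix : (fixedSet (sphereAct ρ)).Nonempty) : invTCcover (sphereAct ρ) 3 := by
  obtain ⟨e, he⟩ := hfix
  have hρe : ∀ g, ρ g (e : EuclideanSpace ℝ (Fin (n + 1))) = e := fun g => congrArg Subtype.val (he g)
  have hme : -e ∈ fixedSet (sphereAct ρ) := by
    intro g
    ext1
    show ρ g (-(e : EuclideanSpace ℝ (Fin (n + 1)))) = -e
    rw [map_neg, hρe]
  have hset : fixedSetOf (sphereAct ρ) ((⊤ : Subgroup G) : Set G) = fixedSet (sphereAct ρ) := by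
    ext x; simp [fixedSetOf, fixedSet]
  have hj : JoinedIn (fixedSet (sphereAct ρ)) (-e) e := by
    have := hconn ⊤
    rw [hset] at this
    exact this.joinedIn _ hme _ he
  have g1 := good_geodesic ρ e he
  have g2 := (good_geodesic ρ (-e) hme).move hj
  rw [neg_neg] at g2
  let f : Sph n → ℝ := fun x => inner ℝ (x : EuclideanSpace ℝ (Fin (n + 1))) e
  have hfc : Continuous f := by fun_prop
  have hfi : ∀ g x, f (sphereAct ρ g x) = f x := by
    intro g x
    simp only [f, act_coe]
    conv_lhs => rw [← hρe g]
    exact (ρ g).inner_map_map _ _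
  have hfe : f e = 1 := by simp [f]
  have hfe' : f (-e) = -1 := by simp [f]
  have g3 : Good (sphereAct ρ) e ({x | 0 < f x} ∪ {x | f x < 0}) := by
    refine Good.union (g1.mono ?_ (isOpen_lt continuous_const hfc) ?_)
      (g2.mono ?_ (isOpen_lt hfc continuous_const) ?_) ?_
    · rintro x (hx : 0 < f x) rfl
      rw [hfe'] at hx; linarith
    · intro g x hx; simpa [hfi] using hx
    · rintro x (hx : f x < 0) rfl
      rw [hfe] at hx; linarith
    · intro g x hx; simpa [hfi] using hx
    · exact Set.disjoint_left.mpr fun x (hx : 0 < f x) (hy : f x < 0) => by linarith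
  refine invTCcover_of_good (e := e) ![{x | x ≠ -e}, {x | x ≠ e}, {x | 0 < f x} ∪ {x | f x < 0}] ?_ ?_
  · intro i
    fin_cases i
    · exact g1
    · exact g2
    · exact g3
  · intro x y
    have hee : e ≠ -e := by intro h; rw [← h] at hfe'; linarith
    by_cases h0 : x ≠ -e ∧ y ≠ -e
    · exact ⟨0, h0⟩
    by_cases h1 : x ≠ e ∧ y ≠ e
    · exact ⟨1, h1⟩
    refine ⟨2, ?_⟩
    show (0 < f x ∨ f x < 0) ∧ (0 < f y ∨ f y < 0)
    have key : (x = -e ∧ y = e) ∨ (x = e ∧ y = -e) := by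
      by_cases a : x = -e <;> by_cases b : y = -e <;> by_cases c : x = e <;> by_cases d : y = e <;>
        simp_all
    rcases key with ⟨rfl, rfl⟩ | ⟨rfl, rfl⟩ <;> rw [hfe, hfe'] <;> norm_num

theorem lower (hfix : (fixedSet (sphereAct ρ)).Nonempty) : ¬ invTCcover (sphereAct ρ) 1 := by
  rintro ⟨U, hUo, hU, hs⟩
  obtain ⟨-, s₁, s₂, hc₁, hc₂, hend, heq⟩ := hs 0
  have hU0 : U 0 = univ := by
    rw [← hU]; ext x; simp
  rw [hU0, continuousOn_univ] at hc₁ hc₂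
  simp only [hU0, mem_univ, true_implies] at hend heq
  let V : Submodule ℝ (EuclideanSpace ℝ (Fin (n + 1))) :=
    { carrier := {v | ∀ g, ρ g v = v}
      add_mem' := fun {a b} ha hb g => by rw [map_add, ha g, hb g]
      zero_mem' := fun g => map_zero _
      smul_mem' := fun c x hx g => by rw [map_smul, hx g] }
  let ι : Metric.sphere (0 : V) 1 → Sph n := fun v => ⟨v.1.1, by
    have := norm_eq_of_mem_sphere v
    exact mem_sphere_zero_iff_norm.mpr this⟩
  have hιc : Continuous ι := by fun_prop
  have hιf : ∀ v, ι v ∈ fixedSet (sphereAct ρ) := fun v g => Subtype.ext (v.1.2 g)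
  let κ : fixedSet (sphereAct ρ) → Metric.sphere (0 : V) 1 := fun x =>
    ⟨⟨x.1.1, fun g => congrArg Subtype.val (x.2 g)⟩, by
      have := norm_eq_of_mem_sphere x.1
      exact mem_sphere_zero_iff_norm.mpr this⟩
  have hκc : Continuous κ := by fun_prop
  obtain ⟨e, he⟩ := hfix
  let y0 := κ ⟨e, he⟩
  have hf : ∀ v t, s₁ (ι v, e) t ∈ fixedSet (sphereAct ρ) ∧ s₂ (ι v, e) t ∈ fixedSet (sphereAct ρ) := by
    intro v t
    refine ⟨fun g => ?_, fun g => ?_⟩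
    · have := (heq g g (ι v, e) t).1
      rw [hιf v g, he g] at this
      exact this.symm
    · have := (heq g g (ι v, e) t).2
      rw [hιf v g, he g] at this
      exact this.symm
  have hmid : ∀ v, s₁ (ι v, e) 1 = s₂ (ι v, e) 0 := by
    intro v
    have h1 := (hend (ι v, e)).2.2
    have h2 : s₁ (ι v, e) 1 ∈ orbit (sphereAct ρ) (s₁ (ι v, e) 1) := ⟨1, (hf v 1).1 1⟩
    rw [h1] at h2
    obtain ⟨g, hg⟩ := h2
    rw [← hg, (hf v 0).2 g]
  have hnt : Nontrivial V := by
    refine ⟨⟨y0.1, 0, ?_⟩⟩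
    intro h
    have := norm_eq_of_mem_sphere y0
    rw [h] at this; simp at this
  have j1 : Continuous fun p : I × Metric.sphere (0 : V) 1 => s₁ (ι p.2, e) p.1 := by fun_prop
  have j2 : Continuous fun p : I × Metric.sphere (0 : V) 1 => s₂ (ι p.2, e) p.1 := by fun_prop
  let K1 : C(I × Metric.sphere (0 : V) 1, Metric.sphere (0 : V) 1) :=
    ⟨fun p => κ ⟨s₁ (ι p.2, e) p.1, (hf p.2 p.1).1⟩, hκc.comp (j1.subtype_mk _)⟩
  let K2 : C(I × Metric.sphere (0 : V) 1, Metric.sphere (0 : V) 1) :=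
    ⟨fun p => κ ⟨s₂ (ι p.2, e) p.1, (hf p.2 p.1).2⟩, hκc.comp (j2.subtype_mk _)⟩
  let m : C(Metric.sphere (0 : V) 1, Metric.sphere (0 : V) 1) :=
    K1.comp ⟨fun v => (1, v), by fun_prop⟩
  have hκι : ∀ v h, κ ⟨ι v, h⟩ = v := fun v h => rfl
  refine sphere_not_contr y0 (Homotopic.trans (g := m) ⟨⟨K1, ?_, ?_⟩⟩ ⟨⟨K2, ?_, ?_⟩⟩)
  · intro v
    have : (⟨s₁ (ι v, e) 0, (hf v 0).1⟩ : fixedSet (sphereAct ρ)) = ⟨ι v, hιf v⟩ :=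
      Subtype.ext (hend (ι v, e)).1
    exact congrArg κ this
  · intro v; rfl
  · intro v
    have : (⟨s₂ (ι v, e) 0, (hf v 0).2⟩ : fixedSet (sphereAct ρ)) = ⟨s₁ (ι v, e) 1, (hf v 1).1⟩ :=
      Subtype.ext (hmid v).symm
    exact congrArg κ this
  · intro v
    have : (⟨s₂ (ι v, e) 1, (hf v 1).2⟩ : fixedSet (sphereAct ρ)) = ⟨e, he⟩ :=
      Subtype.ext (hend (ι v, e)).2.1
    exact congrArg κ this

end sphere
end TCaux

/-- If a finite group `G` acts linearly on a `G`-connected sphere `S^n` with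
non-empty fixed point set, then `2 ≤ TC^G(S^n) ≤ 3`. -/
theorem invTC_linear_sphere_between_two_and_three {G : Type*} [Group G] [Finite G]
    (n : ℕ) (hn : 1 ≤ n)
    (ρ : G →* (EuclideanSpace ℝ (Fin (n + 1)) ≃ₗᵢ[ℝ] EuclideanSpace ℝ (Fin (n + 1))))
    (hconn : ∀ H : Subgroup G, IsPathConnected (fixedSetOf (sphereAct ρ) (H : Set G)))
    (hfix : (fixedSet (sphereAct ρ)).Nonempty) :
    2 ≤ invTC (sphereAct ρ) ∧ invTC (sphereAct ρ) ≤ 3 := by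
  constructor
  · refine le_sInf ?_
    rintro k ⟨m, rfl, hm, hP⟩
    have : m ≠ 1 := by
      rintro rfl
      exact TCaux.lower ρ hfix hP
    have h2 : 2 ≤ m := by omega
    exact_mod_cast h2
  · exact sInf_le ⟨3, rfl, by norm_num, TCaux.upper ρ hconn hfix⟩
end
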